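/- arXiv:1812.08259 — 7 statements merged into one kernel-verified Lean document; each statement's English description precedes it below -/
import Mathlib

section
/- Let G = (V,E) be a finite directed acyclic graph with source s ∈ V and target t ∈ V, and let p ∈ (0,1). For every node v ∈ V, the intermediacy of v factorizes as φ_v(p) = Pr(X_{sv} = 1) · Pr(X_{vt} = 1), i.e. the probability that the random active edge set contains all edges of some directed s–t path through v equals the product of the probability that it contains all edges of some directed path from s to v and the probability that it contains all edges of some directed path from v to t. -/
open scoped Classical

/-- `PathIn F a b l` means `l` is the list of edges of a directed walk from `a` to `b`
all of whose edges belong to the edge set `F`.  (In a directed acyclic graph every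
walk is a path.) -/
inductive PathIn {V : Type*} (F : Finset (V × V)) : V → V → List (V × V) → Prop
  | nil (a : V) : PathIn F a a []
  | cons {a b c : V} {l : List (V × V)} (hab : (a, b) ∈ F) (h : PathIn F b c l) :
      PathIn F a c ((a, b) :: l)

/-- The directed graph with edge set `E` is acyclic: the only directed path from a
node to itself is the empty one. -/
def Acyclic {V : Type*} (E : Finset (V × V)) : Prop :=
  ∀ (a : V) (l : List (V × V)), PathIn E a a l → l = []

/-- There exists a directed path from `a` to `b` with all edges in `E`. -/
def Reaches {V : Type*} (E : Finset (V × V)) (a b : V) : Prop :=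
  ∃ l, PathIn E a b l

/-- `l` is a directed path from `s` to `t` in `E` passing through `v`. -/
def ThroughPath {V : Type*} (E : Finset (V × V)) (s t v : V) (l : List (V × V)) : Prop :=
  PathIn E s t l ∧ (v = s ∨ v ∈ l.map Prod.snd)

/-- Some directed `s`–`t` path through `v` (in the graph with edge set `E`) has all
its edges in `S`. -/
def ActiveThrough {V : Type*} (E S : Finset (V × V)) (s t v : V) : Prop :=
  ∃ l, ThroughPath E s t v l ∧ ∀ e ∈ l, e ∈ S

/-- The intermediacy `φ_v(p)`: the probability that a random edge subset `S ⊆ E`,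
drawn with probability `p^|S| (1-p)^(|E|-|S|)`, contains all edges of some directed
`s`–`t` path through `v`. -/
noncomputable def intermediacy {V : Type*} [DecidableEq V] (E : Finset (V × V)) (p : ℝ)
    (s t v : V) : ℝ :=
  ∑ S ∈ E.powerset, p ^ S.card * (1 - p) ^ (E.card - S.card) *
    (if ActiveThrough E S s t v then 1 else 0)

/-- `Pr(X_{ab} = 1)`: the probability that a random edge subset `S ⊆ E` contains all
edges of some directed path from `a` to `b`. -/
noncomputable def prReach {V : Type*} [DecidableEq V] (E : Finset (V × V)) (p : ℝ)
    (a b : V) : ℝ :=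
  ∑ S ∈ E.powerset, p ^ S.card * (1 - p) ^ (E.card - S.card) *
    (if ∃ l, PathIn E a b l ∧ ∀ e ∈ l, e ∈ S then 1 else 0)

/-- `ℓ_v`: the length of a shortest directed `s`–`t` path passing through `v`. -/
noncomputable def shortestThrough {V : Type*} (E : Finset (V × V)) (s t v : V) : ℕ :=
  sInf {n | ∃ l, ThroughPath E s t v l ∧ l.length = n}

/-- `σ_v`: the maximum number of pairwise edge-disjoint directed `s`–`t` paths all
passing through `v`. -/
noncomputable def maxDisjointThrough {V : Type*} (E : Finset (V × V)) (s t v : V) : ℕ :=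
  sSup {n | ∃ P : Finset (List (V × V)), P.card = n ∧ (∀ l ∈ P, ThroughPath E s t v l) ∧
    ∀ l₁ ∈ P, ∀ l₂ ∈ P, l₁ ≠ l₂ → ∀ e, e ∈ l₁ → e ∉ l₂}

theorem PathIn.append' {V : Type*} {F : Finset (V × V)} {a b c : V} {l m : List (V × V)}
    (h : PathIn F a b l) (k : PathIn F b c m) : PathIn F a c (l ++ m) := by
  induction h with
  | nil a => simpa using k
  | cons hab h ih => exact PathIn.cons hab (ih k)

theorem PathIn.split {V : Type*} {F : Finset (V × V)} {a c v : V} {l : List (V × V)}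
    (h : PathIn F a c l) (hv : v = a ∨ v ∈ l.map Prod.snd) :
    ∃ l₁ l₂, l = l₁ ++ l₂ ∧ PathIn F a v l₁ ∧ PathIn F v c l₂ := by
  induction h with
  | nil a =>
    obtain rfl : v = a := by simpa using hv
    exact ⟨[], [], rfl, PathIn.nil _, PathIn.nil _⟩
  | @cons a b c l hab h ih =>
    rcases hv with rfl | hv
    · exact ⟨[], _, rfl, PathIn.nil _, PathIn.cons hab h⟩
    · have : v = b ∨ v ∈ l.map Prod.snd := by
        simpa only [List.map_cons, List.mem_cons] using hv
      obtain ⟨l₁, l₂, rfl, h1, h2⟩ := ih this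
      exact ⟨(a, b) :: l₁, l₂, rfl, PathIn.cons hab h1, h2⟩

theorem PathIn.end_mem {V : Type*} {F : Finset (V × V)} {a b : V} {l : List (V × V)}
    (h : PathIn F a b l) : b = a ∨ b ∈ l.map Prod.snd := by
  induction h with
  | nil a => exact Or.inl rfl
  | cons hab h ih =>
    right
    simpa only [List.map_cons, List.mem_cons] using ih

/-- each edge of a path lies in `F`, its tail is reachable from the start
and its head reaches the end -/
theorem PathIn.edge {V : Type*} {F : Finset (V × V)} {a b : V} {l : List (V × V)}
    (h : PathIn F a b l) : ∀ e ∈ l, e ∈ F ∧ Reaches F a e.1 ∧ Reaches F e.2 b := by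
  induction h with
  | nil a => simp
  | @cons a b c l hab h ih =>
    intro e he
    rcases List.mem_cons.1 he with rfl | he
    · exact ⟨hab, ⟨[], PathIn.nil _⟩, ⟨_, h⟩⟩
    · obtain ⟨h1, ⟨m, hm⟩, h3⟩ := ih e he
      exact ⟨h1, ⟨_, PathIn.cons hab hm⟩, h3⟩

theorem activeThrough_iff {V : Type*} (E S : Finset (V × V)) (s t v : V) :
    ActiveThrough E S s t v ↔ (∃ l, PathIn E s v l ∧ ∀ e ∈ l, e ∈ S) ∧
      (∃ l, PathIn E v t l ∧ ∀ e ∈ l, e ∈ S) := by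
  constructor
  · rintro ⟨l, ⟨h, hv⟩, hS⟩
    obtain ⟨l₁, l₂, rfl, h1, h2⟩ := h.split hv
    exact ⟨⟨l₁, h1, fun e he => hS e (List.mem_append_left _ he)⟩,
      ⟨l₂, h2, fun e he => hS e (List.mem_append_right _ he)⟩⟩
  · rintro ⟨⟨l₁, h1, k1⟩, ⟨l₂, h2, k2⟩⟩
    refine ⟨l₁ ++ l₂, ⟨h1.append' h2, ?_⟩, ?_⟩
    · rcases h1.end_mem with h | h
      · exact Or.inl h
      · right
        rw [List.map_append]
        exact List.mem_append_left _ h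
    · intro e he
      rcases List.mem_append.1 he with he | he
      · exact k1 e he
      · exact k2 e he

theorem sum_powerset_split {α : Type*} [DecidableEq α] (A B : Finset α) (hd : Disjoint A B)
    (p : ℝ) (f g : Finset α → ℝ) :
    ∑ S ∈ (A ∪ B).powerset, p ^ S.card * (1 - p) ^ ((A ∪ B).card - S.card) *
      (f (S ∩ A) * g (S ∩ B)) =
    (∑ S ∈ A.powerset, p ^ S.card * (1 - p) ^ (A.card - S.card) * f S) *
    (∑ S ∈ B.powerset, p ^ S.card * (1 - p) ^ (B.card - S.card) * g S) := by
  rw [Finset.sum_mul_sum, ← Finset.sum_product']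
  have hd' := Finset.disjoint_left.1 hd
  refine Finset.sum_nbij' (fun S => (S ∩ A, S ∩ B)) (fun q => q.1 ∪ q.2) ?_ ?_ ?_ ?_ ?_
  · intro S _
    simp
  · intro q hq
    simp only [Finset.mem_product, Finset.mem_powerset] at hq ⊢
    exact Finset.union_subset_union hq.1 hq.2
  · intro S hS
    simp only [Finset.mem_powerset] at hS
    simp only
    rw [← Finset.inter_union_distrib_left]
    exact Finset.inter_eq_left.2 hS
  · rintro ⟨q, r⟩ hq
    simp only [Finset.mem_product, Finset.mem_powerset] at hq
    ext x
    · have := @hq.1 x; have := @hq.2 x; have := @hd' x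
      simp; tauto
    · have := @hq.1 x; have := @hq.2 x; have := @hd' x
      simp; tauto
  · intro S hS
    simp only [Finset.mem_powerset] at hS
    have hc : S.card = (S ∩ A).card + (S ∩ B).card := by
      rw [← Finset.card_union_of_disjoint, ← Finset.inter_union_distrib_left,
        Finset.inter_eq_left.2 hS]
      exact hd.mono Finset.inter_subset_right Finset.inter_subset_right
    have h1 : (S ∩ A).card ≤ A.card := Finset.card_le_card Finset.inter_subset_right
    have h2 : (S ∩ B).card ≤ B.card := Finset.card_le_card Finset.inter_subset_right
    have h3 : (A ∪ B).card - S.card =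
        (A.card - (S ∩ A).card) + (B.card - (S ∩ B).card) := by
      rw [Finset.card_union_of_disjoint hd]; omega
    rw [h3, hc, pow_add, pow_add]
    simp only
    ring

theorem sum_weight_one {α : Type*} [DecidableEq α] (A : Finset α) (p : ℝ) :
    ∑ S ∈ A.powerset, p ^ S.card * (1 - p) ^ (A.card - S.card) * (1 : ℝ) = 1 := by
  simp only [mul_one]
  rw [Finset.sum_pow_mul_eq_add_pow]
  simp

theorem sum_indep {α : Type*} [DecidableEq α] (E A B : Finset α) (hE : A ∪ B = E)
    (hd : Disjoint A B) (p : ℝ) (f g : Finset α → ℝ) (hf : ∀ S, f S = f (S ∩ A))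
    (hg : ∀ S, g S = g (S ∩ B)) :
    ∑ S ∈ E.powerset, p ^ S.card * (1 - p) ^ (E.card - S.card) * (f S * g S) =
    (∑ S ∈ E.powerset, p ^ S.card * (1 - p) ^ (E.card - S.card) * f S) *
    (∑ S ∈ E.powerset, p ^ S.card * (1 - p) ^ (E.card - S.card) * g S) := by
  subst hE
  have h0 := sum_powerset_split A B hd p f g
  have h1 := sum_powerset_split A B hd p f (fun _ => 1)
  have h2 := sum_powerset_split A B hd p (fun _ => 1) g
  rw [sum_weight_one] at h1 h2
  simp only [← hf, ← hg] at h0 h1 h2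
  simp only [mul_one, one_mul] at h1 h2
  rw [h0, h1, h2]

/-- In a finite directed acyclic graph with source `s` and target `t`,
for `p ∈ (0,1)` the intermediacy of every node `v` factorizes as
`φ_v(p) = Pr(X_{sv} = 1) · Pr(X_{vt} = 1)`. -/
theorem intermediacy_factorization {V : Type*} [Fintype V] [DecidableEq V]
    (E : Finset (V × V)) (hacyc : Acyclic E) (s t : V)
    (p : ℝ) (hp : p ∈ Set.Ioo (0 : ℝ) 1) (v : V) :
    intermediacy E p s t v = prReach E p s v * prReach E p v t := by
  unfold intermediacy prReach
  have key := sum_indep E (E.filter fun e => Reaches E e.2 v)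
    (E.filter fun e => ¬ Reaches E e.2 v) (Finset.filter_union_filter_not_eq _ _)
    (Finset.disjoint_filter_filter_not _ _ _) p
    (fun S => if ∃ l, PathIn E s v l ∧ ∀ e ∈ l, e ∈ S then 1 else 0)
    (fun S => if ∃ l, PathIn E v t l ∧ ∀ e ∈ l, e ∈ S then 1 else 0) ?_ ?_
  · rw [← key]
    refine Finset.sum_congr rfl fun S _ => ?_
    congr 1
    simp only [activeThrough_iff]
    generalize (∃ l, PathIn E s v l ∧ ∀ e ∈ l, e ∈ S) = P
    generalize (∃ l, PathIn E v t l ∧ ∀ e ∈ l, e ∈ S) = Q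
    by_cases hP : P <;> by_cases hQ : Q <;> simp [hP, hQ]
  · intro S
    refine if_congr (exists_congr fun l => and_congr_right fun h => ?_) rfl rfl
    refine forall₂_congr fun e he => ?_
    obtain ⟨h1, _, h3⟩ := h.edge e he
    simp [h1, h3]
  · intro S
    refine if_congr (exists_congr fun l => and_congr_right fun h => ?_) rfl rfl
    refine forall₂_congr fun e he => ?_
    obtain ⟨h1, ⟨m, hm⟩, _⟩ := h.edge e he
    have h3 : ¬ Reaches E e.2 v := by
      rintro ⟨k, hk⟩
      have := hacyc v _ (hm.append' (PathIn.cons (a := e.1) (b := e.2) h1 hk))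
      simp at this
    simp [h1, h3]
end

section
/- Let G = (V,E) be a finite directed acyclic graph with source s and target t in which every node lies on at least one directed s–t path, and let u, v ∈ V. If ℓ_u < ℓ_v, then there exists ε > 0 such that for all p ∈ (0, ε) the intermediacies satisfy φ_u(p) > φ_v(p). -/
open scoped Classical

theorem PathIn.exists_initial {V : Type*} {F : Finset (V × V)} {a c : V} {l : List (V × V)}
    (h : PathIn F a c l) (e : V × V) (he : e ∈ l) : ∃ l', PathIn F a e.1 l' := by
  induction h with
  | nil a => simp at he
  | @cons a b c l hab h ih =>
    rcases List.mem_cons.1 he with rfl | he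
    · exact ⟨[], PathIn.nil _⟩
    · obtain ⟨l', hl'⟩ := ih he
      exact ⟨_, PathIn.cons hab hl'⟩

theorem PathIn.nodup_of_acyclic {V : Type*} {F : Finset (V × V)} (hF : Acyclic F) {a c : V}
    {l : List (V × V)} (h : PathIn F a c l) : l.Nodup := by
  induction h with
  | nil a => simp
  | @cons a b c l hab h ih =>
    refine List.nodup_cons.2 ⟨fun he => ?_, ih⟩
    obtain ⟨l', hl'⟩ := h.exists_initial _ he
    have := hF _ _ (PathIn.cons hab hl')
    simp at this

theorem PathIn.subset {V : Type*} {F : Finset (V × V)} {a c : V} {l : List (V × V)}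
    (h : PathIn F a c l) (e : V × V) (he : e ∈ l) : e ∈ F := by
  induction h with
  | nil a => simp at he
  | @cons a b c l hab h ih =>
    rcases List.mem_cons.1 he with rfl | he
    · exact hab
    · exact ih he

/-- If every node lies on a directed `s`–`t` path and `ℓ_u < ℓ_v`, then
there is an `ε > 0` such that `φ_u(p) > φ_v(p)` for all `p ∈ (0, ε)`. -/
theorem intermediacy_gt_of_shorter {V : Type*} [Fintype V] [DecidableEq V]
    (E : Finset (V × V)) (hacyc : Acyclic E) (s t : V)
    (hall : ∀ x : V, ∃ l, ThroughPath E s t x l) (u v : V)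
    (hlen : shortestThrough E s t u < shortestThrough E s t v) :
    ∃ ε > (0 : ℝ), ∀ p : ℝ, 0 < p → p < ε →
      intermediacy E p s t v < intermediacy E p s t u := by
  set k := shortestThrough E s t u with hk
  set n := E.card with hn
  have hmem : k ∈ {n | ∃ l, ThroughPath E s t u l ∧ l.length = n} := by
    obtain ⟨l, hl⟩ := hall u
    exact Nat.sInf_mem ⟨l.length, l, hl, rfl⟩
  obtain ⟨l, hl, hlk⟩ := hmem
  have hbig : ∀ S : Finset (V × V), ActiveThrough E S s t v → k + 1 ≤ S.card := by
    rintro S ⟨m, hm, hmS⟩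
    have h1 : shortestThrough E s t v ≤ m.length := Nat.sInf_le ⟨m, hm, rfl⟩
    have h2 : m.toFinset.card = m.length :=
      List.toFinset_card_of_nodup (hm.1.nodup_of_acyclic hacyc)
    have h3 : m.toFinset.card ≤ S.card :=
      Finset.card_le_card fun e he => hmS e (List.mem_toFinset.1 he)
    omega
  refine ⟨1 / (2 * 4 ^ n), by positivity, fun p hp0 hp => ?_⟩
  have h4 : (1 : ℝ) ≤ 4 ^ n := one_le_pow₀ (by norm_num)
  have hp' : p * (2 * 4 ^ n) < 1 := (lt_div_iff₀ (by positivity)).1 hp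
  have hp4 : p * 4 ^ n < 1 := by nlinarith
  have hp2 : p ≤ 1 / 2 := by nlinarith
  have hupper : intermediacy E p s t v ≤ 2 ^ n * p ^ (k + 1) := by
    have : ∀ S ∈ E.powerset, p ^ S.card * (1 - p) ^ (E.card - S.card) *
        (if ActiveThrough E S s t v then (1 : ℝ) else 0) ≤ p ^ (k + 1) := by
      intro S _
      split_ifs with hS
      · have h1 : p ^ S.card ≤ p ^ (k + 1) :=
          pow_le_pow_of_le_one hp0.le (by linarith) (hbig S hS)
        have h2 : (1 - p) ^ (E.card - S.card) ≤ 1 := pow_le_one₀ (by linarith) (by linarith)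
        have h3 : 0 ≤ p ^ S.card := by positivity
        nlinarith
      · rw [mul_zero]; positivity
    refine (Finset.sum_le_card_nsmul _ _ _ this).trans (le_of_eq ?_)
    rw [Finset.card_powerset, nsmul_eq_mul]
    push_cast
    rfl
  have hlower : p ^ k * (1 / 2) ^ n ≤ intermediacy E p s t u := by
    have hS : l.toFinset ∈ E.powerset :=
      Finset.mem_powerset.2 fun e he => hl.1.subset e (List.mem_toFinset.1 he)
    have hact : ActiveThrough E l.toFinset s t u := ⟨l, hl, fun e he => List.mem_toFinset.2 he⟩
    have h1p : 0 ≤ 1 - p := by linarith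
    refine le_trans ?_ (Finset.single_le_sum (f := fun S : Finset (V × V) =>
      p ^ S.card * (1 - p) ^ (E.card - S.card) *
        (if ActiveThrough E S s t u then (1 : ℝ) else 0)) (fun S _ => ?_) hS)
    · simp only [if_pos hact, mul_one]
      have hc : l.toFinset.card ≤ k := hlk ▸ List.toFinset_card_le l
      refine mul_le_mul (pow_le_pow_of_le_one hp0.le (by linarith) hc) ?_ (by positivity)
        (by positivity)
      calc ((1 : ℝ) / 2) ^ n ≤ (1 / 2) ^ (E.card - l.toFinset.card) :=
            pow_le_pow_of_le_one (by norm_num) (by norm_num) (Nat.sub_le _ _)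
        _ ≤ (1 - p) ^ (E.card - l.toFinset.card) :=
            pow_le_pow_left₀ (by norm_num) (by linarith) _
    · split_ifs <;> positivity
  refine hupper.trans_lt (lt_of_lt_of_le ?_ hlower)
  have h42 : (4 : ℝ) ^ n = 2 ^ n * 2 ^ n := by rw [← mul_pow]; norm_num
  have h2p : 2 ^ n * p < (1 / 2) ^ n := by
    rw [one_div, inv_pow, lt_inv_comm₀ (by positivity) (by positivity), ← one_div,
      lt_div_iff₀ (by positivity)]
    rw [h42] at hp4
    linarith
  calc (2 : ℝ) ^ n * p ^ (k + 1) = p ^ k * (2 ^ n * p) := by ring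
    _ < p ^ k * (1 / 2) ^ n := mul_lt_mul_of_pos_left h2p (by positivity)
end

section
/- Let G = (V,E) be a finite directed acyclic graph with source s and target t in which every node lies on at least one directed s–t path, and let u, v ∈ V with ℓ_u < ℓ_v. Then the ratio φ_v(p)/φ_u(p) tends to 0 as p tends to 0 from above. -/
open scoped Classical

theorem PathIn.mem_edges {V : Type*} {F : Finset (V × V)} {a b : V} {l : List (V × V)}
    (h : PathIn F a b l) : ∀ e ∈ l, e ∈ F := by
  induction h with
  | nil a => simp
  | cons hab h ih =>
    intro e he
    rcases List.mem_cons.1 he with rfl | he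
    · exact hab
    · exact ih e he

theorem PathIn.reach_fst {V : Type*} {F : Finset (V × V)} {a b : V} {l : List (V × V)}
    (h : PathIn F a b l) : ∀ e ∈ l, ∃ l', PathIn F a e.1 l' := by
  induction h with
  | nil a => simp
  | cons hab h ih =>
    intro e he
    rcases List.mem_cons.1 he with rfl | he
    · exact ⟨[], PathIn.nil _⟩
    · obtain ⟨l', hl'⟩ := ih e he
      exact ⟨_, PathIn.cons hab hl'⟩

theorem PathIn.nodup_edges {V : Type*} {F : Finset (V × V)} (hF : Acyclic F) {a b : V}
    {l : List (V × V)} (h : PathIn F a b l) : l.Nodup := by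
  induction h with
  | nil a => simp
  | cons hab h ih =>
    refine List.nodup_cons.2 ⟨fun hmem => ?_, ih⟩
    obtain ⟨l', hl'⟩ := h.reach_fst _ hmem
    have := hF _ _ (PathIn.cons hab hl')
    simp at this

theorem intermediacy_upper {V : Type*} [DecidableEq V]
    (E : Finset (V × V)) (hacyc : Acyclic E) (s t v : V) (p : ℝ) (hp0 : 0 < p) (hp1 : p ≤ 1 / 2) :
    intermediacy E p s t v ≤ 2 ^ E.card * p ^ shortestThrough E s t v := by
  unfold intermediacy
  have : ∀ S ∈ E.powerset, p ^ S.card * (1 - p) ^ (E.card - S.card) *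
    (if ActiveThrough E S s t v then (1 : ℝ) else 0) ≤ p ^ shortestThrough E s t v := by
    intro S hS
    split_ifs with hA
    · obtain ⟨l, hl, hlS⟩ := hA
      have h1 : shortestThrough E s t v ≤ l.length := Nat.sInf_le ⟨l, hl, rfl⟩
      have h2 : l.length ≤ S.card := by
        rw [← List.toFinset_card_of_nodup (hl.1.nodup_edges hacyc)]
        exact Finset.card_le_card fun e he => hlS e (List.mem_toFinset.1 he)
      rw [mul_one]
      have h3 : (1 - p) ^ (E.card - S.card) ≤ 1 := pow_le_one₀ (by linarith) (by linarith)
      have h4 : p ^ S.card ≤ p ^ shortestThrough E s t v :=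
        pow_le_pow_of_le_one hp0.le (by linarith) (h1.trans h2)
      have h5 : 0 ≤ p ^ S.card := by positivity
      nlinarith
    · rw [mul_zero]; positivity
  refine (Finset.sum_le_sum this).trans ?_
  simp [Finset.card_powerset]

theorem intermediacy_lower {V : Type*} [DecidableEq V]
    (E : Finset (V × V)) (s t u : V) (hu : ∃ l, ThroughPath E s t u l)
    (p : ℝ) (hp0 : 0 < p) (hp1 : p ≤ 1 / 2) :
    (1 / 2) ^ E.card * p ^ shortestThrough E s t u ≤ intermediacy E p s t u := by
  obtain ⟨l, hl, hlen⟩ : shortestThrough E s t u ∈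
      {n | ∃ l, ThroughPath E s t u l ∧ l.length = n} := by
    obtain ⟨l, hl⟩ := hu
    exact Nat.sInf_mem ⟨_, l, hl, rfl⟩
  have hq : (1 : ℝ) / 2 ≤ 1 - p := by linarith
  have hq0 : 0 ≤ 1 - p := by linarith
  have hsub : l.toFinset ∈ E.powerset :=
    Finset.mem_powerset.2 fun e he => hl.1.mem_edges e (List.mem_toFinset.1 he)
  have hact : ActiveThrough E l.toFinset s t u := ⟨l, hl, fun e he => List.mem_toFinset.2 he⟩
  unfold intermediacy
  refine le_trans ?_ (Finset.single_le_sum (f := fun S => p ^ S.card *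
    (1 - p) ^ (E.card - S.card) * (if ActiveThrough E S s t u then (1 : ℝ) else 0)) ?_ hsub)
  · simp only [if_pos hact, mul_one]
    rw [mul_comm]
    have h1 : p ^ shortestThrough E s t u ≤ p ^ l.toFinset.card := by
      apply pow_le_pow_of_le_one hp0.le (by linarith)
      rw [← hlen]
      exact List.toFinset_card_le l
    have h2 : ((1 : ℝ) / 2) ^ E.card ≤ (1 - p) ^ (E.card - l.toFinset.card) :=
      (pow_le_pow_of_le_one (by norm_num) (by norm_num) (Nat.sub_le _ _)).trans
        (pow_le_pow_left₀ (by norm_num) hq _)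
    exact mul_le_mul h1 h2 (by positivity) (by positivity)
  · intro S _
    split_ifs <;> positivity

/-- If every node lies on a directed `s`–`t` path and `ℓ_u < ℓ_v`, then
`φ_v(p) / φ_u(p) → 0` as `p → 0⁺`. -/
theorem intermediacy_ratio_tendsto_zero {V : Type*} [Fintype V] [DecidableEq V]
    (E : Finset (V × V)) (hacyc : Acyclic E) (s t : V)
    (hall : ∀ x : V, ∃ l, ThroughPath E s t x l) (u v : V)
    (hlen : shortestThrough E s t u < shortestThrough E s t v) :
    Filter.Tendsto (fun p : ℝ => intermediacy E p s t v / intermediacy E p s t u)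
      (nhdsWithin 0 (Set.Ioi 0)) (nhds 0) := by
  have key : ∀ p : ℝ, 0 < p → p ≤ 1 / 2 →
      0 ≤ intermediacy E p s t v / intermediacy E p s t u ∧
      intermediacy E p s t v / intermediacy E p s t u ≤ 4 ^ E.card * p := by
    intro p hp0 hp1
    have hU := intermediacy_upper E hacyc s t v p hp0 hp1
    have hL := intermediacy_lower E s t u (hall u) p hp0 hp1
    have hV := intermediacy_lower E s t v (hall v) p hp0 hp1
    have hLpos : 0 < (1 / 2 : ℝ) ^ E.card * p ^ shortestThrough E s t u := by positivity
    have hVpos : 0 < (1 / 2 : ℝ) ^ E.card * p ^ shortestThrough E s t v := by positivity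
    refine ⟨div_nonneg (hVpos.le.trans hV) (hLpos.le.trans hL), ?_⟩
    rw [div_le_iff₀ (hLpos.trans_le hL)]
    have h1 : p ^ shortestThrough E s t v ≤ p ^ (shortestThrough E s t u + 1) :=
      pow_le_pow_of_le_one hp0.le (by linarith) hlen
    have h2 : (4 : ℝ) ^ E.card * (1 / 2) ^ E.card = 2 ^ E.card := by
      rw [← mul_pow]; norm_num
    calc intermediacy E p s t v ≤ 2 ^ E.card * p ^ shortestThrough E s t v := hU
      _ ≤ 2 ^ E.card * p ^ (shortestThrough E s t u + 1) := by gcongr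
      _ = 4 ^ E.card * p * ((1 / 2) ^ E.card * p ^ shortestThrough E s t u) := by
        rw [← h2]; ring
      _ ≤ _ := by gcongr
  have hev : ∀ᶠ p : ℝ in nhdsWithin 0 (Set.Ioi 0), 0 < p ∧ p ≤ 1 / 2 := by
    filter_upwards [Ioc_mem_nhdsGT (show (0 : ℝ) < 1 / 2 by norm_num)] with p hp
    exact hp
  have hlim : Filter.Tendsto (fun p : ℝ => (4 : ℝ) ^ E.card * p)
      (nhdsWithin 0 (Set.Ioi 0)) (nhds 0) := by
    have : Filter.Tendsto (fun p : ℝ => (4 : ℝ) ^ E.card * p) (nhds 0) (nhds (4 ^ E.card * 0)) :=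
      (continuous_const.mul continuous_id).tendsto 0
    rw [mul_zero] at this
    exact this.mono_left nhdsWithin_le_nhds
  exact tendsto_of_tendsto_of_tendsto_of_le_of_le' tendsto_const_nhds hlim
    (hev.mono fun p hp => (key p hp.1 hp.2).1) (hev.mono fun p hp => (key p hp.1 hp.2).2)
end

section
/- Let G = (V,E) be a finite directed acyclic graph with source s and target t in which every node lies on at least one directed s–t path, and let v ∈ V. Then φ_v(p)/p^{ℓ_v} tends, as p tends to 0 from above, to the number of directed s–t paths through v of length ℓ_v, and this number is positive. -/
open scoped Classical

theorem PathIn.reach_of_mem {V : Type*} {E : Finset (V × V)} {a b : V} {l : List (V × V)}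
    (h : PathIn E a b l) : ∀ x y : V, (x, y) ∈ l → ∃ l', PathIn E a x l' := by
  induction h with
  | nil a => intro x y hm; simp at hm
  | cons hab h ih =>
    intro x y hm
    rcases List.mem_cons.1 hm with h1 | h1
    · obtain ⟨rfl, rfl⟩ := Prod.mk.inj h1
      exact ⟨[], PathIn.nil _⟩
    · obtain ⟨l', hl'⟩ := ih x y h1
      exact ⟨_, PathIn.cons hab hl'⟩

theorem PathIn.subset_edges {V : Type*} {E : Finset (V × V)} {a b : V} {l : List (V × V)}
    (h : PathIn E a b l) : ∀ e ∈ l, e ∈ E := by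
  induction h with
  | nil a => simp
  | cons hab h ih =>
    intro e he
    rcases List.mem_cons.1 he with h1 | h1
    · rw [h1]; exact hab
    · exact ih e h1

theorem PathIn.head_not_mem {V : Type*} {E : Finset (V × V)} (hacyc : Acyclic E)
    {a b c : V} {l : List (V × V)} (hab : (a, b) ∈ E) (h : PathIn E b c l) (y : V) :
    (a, y) ∉ l := by
  intro hm
  obtain ⟨l', hl'⟩ := h.reach_of_mem a y hm
  have := hacyc a _ (PathIn.cons hab hl')
  simp at this

theorem PathIn.nodup {V : Type*} {E : Finset (V × V)} (hacyc : Acyclic E)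
    {a b : V} {l : List (V × V)} (h : PathIn E a b l) : l.Nodup := by
  induction h with
  | nil a => simp
  | cons hab h ih => exact List.nodup_cons.2 ⟨h.head_not_mem hacyc hab _, ih⟩

theorem PathIn.unique {V : Type*} {E : Finset (V × V)} (hacyc : Acyclic E)
    {a b : V} {l : List (V × V)} (h : PathIn E a b l) :
    ∀ l', PathIn E a b l' → (∀ e, e ∈ l ↔ e ∈ l') → l = l' := by
  induction h with
  | nil a => intro l' h' _; exact (hacyc a l' h').symm
  | @cons a b c l hab h ih =>
    intro l' h' heq
    cases h' with
    | nil => simpa using heq (a, b)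
    | @cons _ b' _ l' hab' h' =>
      have hb : b = b' := by
        have h1 := (heq (a, b)).1 (by simp)
        rcases List.mem_cons.1 h1 with h2 | h2
        · exact (Prod.mk.inj h2).2
        · exact absurd h2 (h'.head_not_mem hacyc hab' _)
      subst hb
      rw [ih l' h']
      intro e
      have h1 := h.head_not_mem hacyc hab b
      have h2 := h'.head_not_mem hacyc hab b
      have h3 := heq e
      simp only [List.mem_cons] at h3
      by_cases he : e = (a, b)
      · subst he; tauto
      · tauto

/-- If every node lies on a directed `s`–`t` path, then
`φ_v(p) / p^{ℓ_v}` tends, as `p → 0⁺`, to the number of directed `s`–`t` paths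
through `v` of length `ℓ_v`, and this number is positive. -/
theorem intermediacy_asymptotics_at_zero {V : Type*} [Fintype V] [DecidableEq V]
    (E : Finset (V × V)) (hacyc : Acyclic E) (s t : V)
    (hall : ∀ x : V, ∃ l, ThroughPath E s t x l) (v : V) :
    0 < Set.ncard {l : List (V × V) |
        ThroughPath E s t v l ∧ l.length = shortestThrough E s t v} ∧
    Filter.Tendsto (fun p : ℝ => intermediacy E p s t v / p ^ shortestThrough E s t v)
      (nhdsWithin 0 (Set.Ioi 0))
      (nhds ((Set.ncard {l : List (V × V) |
        ThroughPath E s t v l ∧ l.length = shortestThrough E s t v} : ℕ) : ℝ)) := by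
  set L := shortestThrough E s t v with hL
  set A := {l : List (V × V) | ThroughPath E s t v l ∧ l.length = L} with hA
  have hmin : ∀ l, ThroughPath E s t v l → L ≤ l.length := fun l hl =>
    Nat.sInf_le ⟨l, hl, rfl⟩
  have hne : A.Nonempty := by
    obtain ⟨l, hl⟩ := hall v
    exact Nat.sInf_mem (s := {n | ∃ l, ThroughPath E s t v l ∧ l.length = n}) ⟨_, l, hl, rfl⟩
  have hcard : ∀ l, ThroughPath E s t v l → l.toFinset.card = l.length := fun l hl =>
    List.toFinset_card_of_nodup (hl.1.nodup hacyc)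
  have hinj : Set.InjOn (fun l : List (V × V) => l.toFinset) A := by
    intro l hl l' hl' h
    refine hl.1.1.unique hacyc l' hl'.1.1 fun e => ?_
    have := congrArg (fun F => e ∈ F) h
    simpa using this
  have hact : ∀ S, ActiveThrough E S s t v → L ≤ S.card := by
    rintro S ⟨l, hl, hS⟩
    calc L ≤ l.length := hmin l hl
      _ = l.toFinset.card := (hcard l hl).symm
      _ ≤ S.card := Finset.card_le_card fun e he => hS e (by simpa using he)
  let T : Finset (Finset (V × V)) :=
    E.powerset.filter fun S => ActiveThrough E S s t v ∧ S.card = L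
  have himg : (fun l : List (V × V) => l.toFinset) '' A = (T : Set (Finset (V × V))) := by
    ext S
    simp only [Set.mem_image, T, Finset.coe_filter, Finset.mem_powerset, Set.mem_setOf_eq]
    constructor
    · rintro ⟨l, hl, rfl⟩
      refine ⟨fun e he => hl.1.1.subset_edges e (by simpa using he),
        ⟨l, hl.1, fun e he => by simpa using he⟩, ?_⟩
      rw [hcard l hl.1]; exact hl.2
    · rintro ⟨hSE, ⟨l, hl, hS⟩, hc⟩
      have hsub : l.toFinset ⊆ S := fun e he => hS e (by simpa using he)
      have h1 := hmin l hl
      have h2 := hcard l hl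
      have h3 := Finset.card_le_card hsub
      exact ⟨l, ⟨hl, by omega⟩, Finset.eq_of_subset_of_card_le hsub (by omega)⟩
  have hnc : A.ncard = T.card := by
    rw [← Set.ncard_image_of_injOn hinj, himg, Set.ncard_coe_finset]
  have hfin : A.Finite := Set.Finite.of_finite_image (himg ▸ T.finite_toSet) hinj
  refine ⟨(Set.ncard_pos hfin).2 hne, ?_⟩
  let g : ℝ → ℝ := fun p => ∑ S ∈ E.powerset,
    p ^ (S.card - L) * (1 - p) ^ (E.card - S.card) *
      (if ActiveThrough E S s t v then 1 else 0)
  have hg : Continuous g := by fun_prop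
  have hg0 : g 0 = (A.ncard : ℝ) := by
    rw [hnc, Finset.card_filter]
    push_cast
    refine Finset.sum_congr rfl fun S _ => ?_
    by_cases h : ActiveThrough E S s t v
    · have h1 := hact S h
      by_cases h2 : S.card = L
      · simp [h, h2]
      · have : S.card - L ≠ 0 := by omega
        simp [h, h2, this]
    · simp [h]
  have hlim : Filter.Tendsto g (nhdsWithin 0 (Set.Ioi 0)) (nhds (A.ncard : ℝ)) := by
    rw [← hg0]
    exact hg.continuousAt.tendsto.mono_left nhdsWithin_le_nhds
  refine hlim.congr' ?_
  filter_upwards [self_mem_nhdsWithin] with p hp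
  have hp0 : p ≠ 0 := ne_of_gt hp
  rw [intermediacy, Finset.sum_div]
  refine Finset.sum_congr rfl fun S _ => ?_
  by_cases h : ActiveThrough E S s t v
  · have h1 := hact S h
    obtain ⟨k, hk⟩ := Nat.exists_eq_add_of_le h1
    rw [if_pos h, hk, Nat.add_sub_cancel_left, pow_add]
    field_simp
  · simp [h]
end

section
/- Let G = (V,E) be a finite directed acyclic graph with source s and target t in which every node lies on at least one directed s–t path, and let u, v ∈ V. If σ_u > σ_v, then there exists ε > 0 such that for all p ∈ (1 − ε, 1) the intermediacies satisfy φ_u(p) > φ_v(p). -/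
open scoped Classical

namespace IntermediacyAux

/-- net outflow contribution of an edge at a vertex -/
noncomputable def ind {V : Type*} [DecidableEq V] (a x : V) : ℤ := if a = x then 1 else 0

noncomputable def net {V : Type*} [DecidableEq V] (F : Finset (V × V)) (x : V) : ℤ :=
  ∑ e ∈ F, (ind e.1 x - ind e.2 x)

theorem sum_ind {V : Type*} [DecidableEq V] (R : Finset V) (a : V) :
    ∑ x ∈ R, ind a x = if a ∈ R then 1 else 0 := by
  simp [ind]

theorem sum_net {V : Type*} [DecidableEq V] (R : Finset V) (F : Finset (V × V)) :
    ∑ x ∈ R, net F x =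
      ∑ e ∈ F, ((if e.1 ∈ R then (1 : ℤ) else 0) - (if e.2 ∈ R then 1 else 0)) := by
  unfold net
  rw [Finset.sum_comm]
  refine Finset.sum_congr rfl fun e _ => ?_
  rw [Finset.sum_sub_distrib, sum_ind, sum_ind]

theorem path_append {V : Type*} {F : Finset (V × V)} {a b c : V} {l m : List (V × V)}
    (h : PathIn F a b l) (h' : PathIn F b c m) : PathIn F a c (l ++ m) := by
  induction h with
  | nil a => simpa using h'
  | cons hab _ ih => exact PathIn.cons hab (ih h')

theorem path_mono {V : Type*} {F E : Finset (V × V)} (hF : F ⊆ E) {a b : V} {l : List (V × V)}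
    (h : PathIn F a b l) : PathIn E a b l := by
  induction h with
  | nil a => exact PathIn.nil a
  | cons hab _ ih => exact PathIn.cons (hF hab) ih

theorem path_mem {V : Type*} {F : Finset (V × V)} {a b : V} {l : List (V × V)}
    (h : PathIn F a b l) : ∀ e ∈ l, e ∈ F := by
  induction h with
  | nil a => simp
  | cons hab _ ih =>
    intro e he
    rcases List.mem_cons.1 he with rfl | he
    · exact hab
    · exact ih e he

theorem path_split {V : Type*} {F : Finset (V × V)} {a b : V} {l : List (V × V)}
    (h : PathIn F a b l) : ∀ e ∈ l, ∃ l1 l2, l = l1 ++ e :: l2 ∧ PathIn F a e.1 l1 ∧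
      PathIn F e.2 b l2 := by
  induction h with
  | nil a => simp
  | @cons a c b l hab h ih =>
    intro e he
    rcases List.mem_cons.1 he with rfl | he
    · exact ⟨[], l, rfl, PathIn.nil _, h⟩
    · obtain ⟨l1, l2, rfl, h1, h2⟩ := ih e he
      exact ⟨(a, c) :: l1, l2, rfl, PathIn.cons hab h1, h2⟩

theorem path_nodup {V : Type*} {E : Finset (V × V)} (hE : Acyclic E) {a b : V}
    {l : List (V × V)} (h : PathIn E a b l) : l.Nodup := by
  induction h with
  | nil a => simp
  | @cons a c b l hab h ih =>
    refine List.nodup_cons.2 ⟨fun hm => ?_, ih⟩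
    obtain ⟨l1, l2, -, h1, -⟩ := path_split h _ hm
    have := hE _ _ (PathIn.cons hab h1)
    simp at this

theorem net_path {V : Type*} [DecidableEq V] {F : Finset (V × V)} {a b : V} {l : List (V × V)}
    (h : PathIn F a b l) (hn : l.Nodup) (x : V) : net l.toFinset x = ind a x - ind b x := by
  induction h with
  | nil a => simp [net]
  | @cons a c b l hab h ih =>
    obtain ⟨h1, h2⟩ := List.nodup_cons.1 hn
    have := ih h2
    unfold net at this ⊢
    rw [List.toFinset_cons, Finset.sum_insert (by simpa using h1), this]
    ring

/-- every path leaving `R` crosses the boundary -/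
theorem path_cross {V : Type*} {F : Finset (V × V)} (R : Finset V) {a b : V}
    {l : List (V × V)} (h : PathIn F a b l) (ha : a ∈ R) (hb : b ∉ R) :
    ∃ e ∈ l, e.1 ∈ R ∧ e.2 ∉ R := by
  induction h with
  | nil a => exact absurd ha hb
  | @cons a c b l hab h ih =>
    by_cases hc : c ∈ R
    · obtain ⟨e, he, h'⟩ := ih hc hb
      exact ⟨e, List.mem_cons_of_mem _ he, h'⟩
    · exact ⟨(a, c), by simp, ha, hc⟩

theorem exists_path {V : Type*} [Fintype V] [DecidableEq V] (F : Finset (V × V)) (a b : V)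
    (k : ℕ) (h : ∀ x, net F x = ((k + 1 : ℕ) : ℤ) * (ind a x - ind b x)) (hab : a ≠ b) :
    ∃ l, PathIn F a b l := by
  by_contra hno
  let R : Finset V := Finset.univ.filter fun x => ∃ l, PathIn F a x l
  have ha : a ∈ R := by simp only [R, Finset.mem_filter, Finset.mem_univ, true_and]; exact ⟨[], PathIn.nil a⟩
  have hb : b ∉ R := by simpa [R] using hno
  have h1 := sum_net R F
  simp_rw [h] at h1
  rw [← Finset.mul_sum, Finset.sum_sub_distrib, sum_ind, sum_ind, if_pos ha, if_neg hb] at h1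
  have h2 : ∑ e ∈ F, ((if e.1 ∈ R then (1 : ℤ) else 0) - (if e.2 ∈ R then 1 else 0)) ≤ 0 := by
    refine Finset.sum_nonpos fun e he => ?_
    by_cases h1 : e.1 ∈ R
    · have : e.2 ∈ R := by
        simp only [R, Finset.mem_filter, Finset.mem_univ, true_and] at h1 ⊢
        obtain ⟨l, hl⟩ := h1
        exact ⟨_, path_append hl (PathIn.cons (l := []) (b := e.2) he (PathIn.nil _))⟩
      simp [h1, this]
    · rw [if_neg h1]; split_ifs <;> simp
  rw [← h1] at h2
  push_cast at h2
  linarith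

theorem decompose {V : Type*} [Fintype V] [DecidableEq V] (E : Finset (V × V))
    (hE : Acyclic E) (a b : V) (hab : a ≠ b) (k : ℕ) :
    ∀ F ⊆ E, (∀ x, net F x = (k : ℤ) * (ind a x - ind b x)) →
    ∃ P : ℕ → List (V × V), (∀ i < k, PathIn F a b (P i)) ∧
      ∀ i < k, ∀ j < k, i ≠ j → ∀ e, e ∈ P i → e ∉ P j := by
  induction k with
  | zero => intro F _ _; exact ⟨fun _ => [], by simp, by simp⟩
  | succ k ih =>
    intro F hF h
    obtain ⟨l, hl⟩ := exists_path F a b k h hab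
    have hn := path_nodup hE (path_mono hF hl)
    have hsub : l.toFinset ⊆ F := fun e he => path_mem hl e (by simpa using he)
    obtain ⟨P, hP, hd⟩ := ih (F \ l.toFinset) (Finset.sdiff_subset.trans hF) (by
      intro x
      have h1 := net_path hl hn x
      have h2 := h x
      have h3 : net (F \ l.toFinset) x + net l.toFinset x = net F x := Finset.sum_sdiff hsub
      push_cast at h2
      linarith)
    have hdl : ∀ i < k, ∀ e ∈ P i, e ∉ l := by
      intro i hi e he
      simpa using (Finset.mem_sdiff.1 (path_mem (hP i hi) e he)).2
    refine ⟨fun i => if i < k then P i else l, ?_, ?_⟩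
    · intro i _
      by_cases hi : i < k
      · simpa [hi] using path_mono Finset.sdiff_subset (hP i hi)
      · simpa [hi] using hl
    · intro i hi j hj hij e
      by_cases hi' : i < k <;> by_cases hj' : j < k
      · simpa [hi', hj'] using hd i hi' j hj' hij e
      · simpa [hi', hj'] using hdl i hi' e
      · simp only [hi', hj', if_true, if_false]
        exact fun h1 h2 => hdl j hj' e h2 h1
      · omega

/-- residual relation -/
def Res {V : Type*} (E F : Finset (V × V)) (x y : V) : Prop :=
  ((x, y) ∈ E ∧ (x, y) ∉ F) ∨ (y, x) ∈ F

theorem rtg_mono {V : Type*} {r q : V → V → Prop} (h : ∀ x y, r x y → q x y) {a b : V}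
    (hab : Relation.ReflTransGen r a b) : Relation.ReflTransGen q a b := by
  induction hab with
  | refl => exact .refl
  | tail _ h2 ih => exact ih.tail (h _ _ h2)

theorem avoid {V : Type*} (r : V → V → Prop) (a b : V) (hab : a ≠ b) (x : V)
    (h : Relation.ReflTransGen r x b) :
    (x ≠ a ∧ Relation.ReflTransGen (fun y z => r y z ∧ y ≠ a ∧ z ≠ a) x b) ∨
    ∃ c, r a c ∧ c ≠ a ∧ Relation.ReflTransGen (fun y z => r y z ∧ y ≠ a ∧ z ≠ a) c b := by
  induction h using Relation.ReflTransGen.head_induction_on with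
  | refl => exact Or.inl ⟨hab.symm, .refl⟩
  | @head x c hxc _ ih =>
    rcases ih with ⟨hc, h⟩ | h
    · by_cases hx : x = a
      · subst hx; exact Or.inr ⟨c, hxc, hc, h⟩
      · exact Or.inl ⟨hx, .head ⟨hxc, hx, hc⟩ h⟩
    · exact Or.inr h

theorem augment {V : Type*} [DecidableEq V] (E : Finset (V × V)) (b : V) (n : ℕ) :
    ∀ (X : Finset V), X.card = n → ∀ F ⊆ E, ∀ a ∈ X,
    Relation.ReflTransGen (fun x y => Res E F x y ∧ x ∈ X ∧ y ∈ X) a b →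
    ∃ F' ⊆ E, ∀ x, net F' x = net F x + ind a x - ind b x := by
  induction n with
  | zero => intro X hX F _ a ha; simp_all
  | succ n ih =>
    intro X hX F hF a ha h
    by_cases hab : a = b
    · subst hab; exact ⟨F, hF, by simp⟩
    rcases avoid _ a b hab a h with ⟨h1, -⟩ | ⟨c, ⟨hac, -, hcX⟩, hca, hc⟩
    · exact absurd rfl h1
    have key : ∀ F1 ⊆ E, (∀ x y, x ≠ a → y ≠ a → Res E F x y → Res E F1 x y) →
        (∀ x, net F1 x = net F x + ind a x - ind c x) →
        ∃ F' ⊆ E, ∀ x, net F' x = net F x + ind a x - ind b x := by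
      intro F1 hF1 hres hnet
      obtain ⟨F', hF', h'⟩ := ih (X.erase a) (by rw [Finset.card_erase_of_mem ha, hX]; rfl) F1 hF1 c
        (Finset.mem_erase.2 ⟨hca, hcX⟩) (rtg_mono (by
          rintro x y ⟨⟨hr, hx, hy⟩, hxa, hya⟩
          exact ⟨hres x y hxa hya hr, Finset.mem_erase.2 ⟨hxa, hx⟩, Finset.mem_erase.2 ⟨hya, hy⟩⟩) hc)
      refine ⟨F', hF', fun x => ?_⟩
      rw [h', hnet]; ring
    rcases hac with ⟨h1, h2⟩ | h1
    · refine key (insert (a, c) F) (Finset.insert_subset h1 hF) ?_ ?_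
      · rintro x y hx hy (⟨h3, h4⟩ | h3)
        · exact Or.inl ⟨h3, by simp [hx, h4]⟩
        · exact Or.inr (by simp [h3])
      · intro x
        unfold net
        rw [Finset.sum_insert h2]; ring
    · refine key (F.erase (c, a)) ((Finset.erase_subset _ _).trans hF) ?_ ?_
      · rintro x y hx hy (⟨h3, h4⟩ | h3)
        · exact Or.inl ⟨h3, by simp [h4]⟩
        · exact Or.inr (by simp [h3, hx])
      · intro x
        have : net (F.erase (c, a)) x + (ind c x - ind a x) = net F x :=
          Finset.sum_erase_add (s := F) (f := fun e : V × V => ind e.1 x - ind e.2 x) h1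
        linarith

theorem menger {V : Type*} [Fintype V] [DecidableEq V] (E : Finset (V × V))
    (hE : Acyclic E) (a b : V) (hab : a ≠ b) :
    ∃ (k : ℕ) (C : Finset (V × V)) (P : ℕ → List (V × V)), C ⊆ E ∧ C.card = k ∧
      (∀ l, PathIn E a b l → ∃ e ∈ l, e ∈ C) ∧
      (∀ i < k, PathIn E a b (P i)) ∧
      ∀ i < k, ∀ j < k, i ≠ j → ∀ e, e ∈ P i → e ∉ P j := by
  let Q : ℕ → Prop := fun k => ∃ F ⊆ E, ∀ x, net F x = (k : ℤ) * (ind a x - ind b x)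
  have hQb : ∀ k, Q k → k ≤ E.card := by
    rintro k ⟨F, hF, h⟩
    have h1 := h a
    have h2 : net F a ≤ F.card := by
      unfold net
      have : ∀ e ∈ F, ind e.1 a - ind e.2 a ≤ 1 := by
        intro e _; unfold ind; split_ifs <;> simp
      simpa using Finset.sum_le_card_nsmul F _ 1 this
    have h3 : ind a a - ind b a = 1 := by simp [ind, hab.symm]
    rw [h3] at h1
    have := Finset.card_le_card hF
    omega
  have hQ0 : Q 0 := ⟨∅, by simp, by simp [net]⟩
  have hk : Q (Nat.findGreatest Q E.card) := Nat.findGreatest_spec (Nat.zero_le _) hQ0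
  set k := Nat.findGreatest Q E.card with hkdef
  have hmax : ¬ Q (k + 1) := by
    intro h
    have := Nat.le_findGreatest (hQb _ h) h
    omega
  obtain ⟨F, hF, hnet⟩ := hk
  let R : Finset V := Finset.univ.filter fun x => Relation.ReflTransGen (Res E F) a x
  have hR : ∀ x, x ∈ R ↔ Relation.ReflTransGen (Res E F) a x := by simp [R]
  have ha : a ∈ R := (hR a).2 .refl
  have hb : b ∉ R := by
    intro hb
    rw [hR] at hb
    obtain ⟨F', hF', h'⟩ := augment E b _ Finset.univ rfl F hF a (Finset.mem_univ _)
      (rtg_mono (by intro x y h; simpa using h) hb)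
    refine hmax ⟨F', hF', fun x => ?_⟩
    rw [h', hnet]; push_cast; ring
  have hcl : ∀ x y, x ∈ R → Res E F x y → y ∈ R := by
    intro x y hx h
    rw [hR] at hx ⊢
    exact hx.tail h
  obtain ⟨P, hP, hd⟩ := decompose E hE a b hab k F hF hnet
  refine ⟨k, E.filter fun e => e.1 ∈ R ∧ e.2 ∉ R, P, Finset.filter_subset _ _, ?_, ?_,
    fun i hi => path_mono hF (hP i hi), hd⟩
  · have h1 := sum_net R F
    simp_rw [hnet] at h1
    rw [← Finset.mul_sum, Finset.sum_sub_distrib, sum_ind, sum_ind, if_pos ha, if_neg hb] at h1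
    have h2 : (E.filter fun e => e.1 ∈ R ∧ e.2 ∉ R) = F.filter fun e => e.1 ∈ R ∧ e.2 ∉ R := by
      ext ⟨x, y⟩
      simp only [Finset.mem_filter]
      constructor
      · rintro ⟨h, hx, hy⟩
        refine ⟨?_, hx, hy⟩
        by_contra hn
        exact hy (hcl x y hx (Or.inl ⟨h, hn⟩))
      · rintro ⟨h, h'⟩; exact ⟨hF h, h'⟩
    rw [h2]
    have h3 : ∑ e ∈ F, ((if e.1 ∈ R then (1 : ℤ) else 0) - (if e.2 ∈ R then 1 else 0)) =
        ∑ e ∈ F, if e.1 ∈ R ∧ e.2 ∉ R then (1 : ℤ) else 0 := by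
      refine Finset.sum_congr rfl fun e he => ?_
      by_cases h1 : e.2 ∈ R
      · have : e.1 ∈ R := hcl _ _ h1 (Or.inr he)
        simp [h1, this]
      · simp [h1]
    rw [h3, Finset.sum_boole] at h1
    simp at h1
    exact_mod_cast h1.symm
  · intro l hl
    obtain ⟨e, he, h1⟩ := path_cross R hl ha hb
    exact ⟨e, he, Finset.mem_filter.2 ⟨path_mem hl e he, h1⟩⟩

theorem through_ne_nil {V : Type*} {E : Finset (V × V)} {a b : V} (hab : a ≠ b)
    {l : List (V × V)} (h : PathIn E a b l) : l ≠ [] := by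
  rintro rfl; cases h; exact hab rfl

/-- a disjoint family is at most as large as a hitting set -/
theorem card_le_cut {V : Type*} {P : Finset (List (V × V))} {C : Finset (V × V)}
    (hC : ∀ l ∈ P, ∃ e ∈ l, e ∈ C)
    (hd : ∀ l₁ ∈ P, ∀ l₂ ∈ P, l₁ ≠ l₂ → ∀ e, e ∈ l₁ → e ∉ l₂) : P.card ≤ C.card := by
  have hC' : ∀ l : List (V × V), ∃ f : l ∈ P → V × V, ∀ h : l ∈ P, f h ∈ l ∧ f h ∈ C := by
    intro l
    by_cases h : l ∈ P
    · obtain ⟨e, he⟩ := hC l h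
      exact ⟨fun _ => e, fun _ => he⟩
    · exact ⟨fun h' => absurd h' h, fun h' => absurd h' h⟩
  choose g hg using hC'
  rcases P.eq_empty_or_nonempty with rfl | ⟨l0, hl0⟩
  · simp
  let f : List (V × V) → V × V := fun l => if h : l ∈ P then g l h else g l0 hl0
  have hf : ∀ l ∈ P, f l ∈ l := by intro l h; simp only [f, dif_pos h]; exact (hg l h).1
  have hf' : ∀ l ∈ P, f l ∈ C := by intro l h; simp only [f, dif_pos h]; exact (hg l h).2
  refine Finset.card_le_card_of_injOn f hf' ?_
  intro l1 h1 l2 h2 h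
  by_contra hne
  exact hd l1 h1 l2 h2 hne (f l1) (hf _ h1) (h ▸ hf _ h2)

def DSet {V : Type*} (E : Finset (V × V)) (s t v : V) : Set ℕ :=
  {n | ∃ P : Finset (List (V × V)), P.card = n ∧ (∀ l ∈ P, ThroughPath E s t v l) ∧
    ∀ l₁ ∈ P, ∀ l₂ ∈ P, l₁ ≠ l₂ → ∀ e, e ∈ l₁ → e ∉ l₂}

theorem dset_le {V : Type*} {E C : Finset (V × V)} {s t v : V}
    (hC : ∀ l, ThroughPath E s t v l → ∃ e ∈ l, e ∈ C) : ∀ n ∈ DSet E s t v, n ≤ C.card := by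
  rintro n ⟨P, rfl, h1, h2⟩
  exact card_le_cut (fun l hl => hC l (h1 l hl)) h2

theorem dset_bdd {V : Type*} {E : Finset (V × V)} {s t : V} (v : V) (hst : s ≠ t) :
    BddAbove (DSet E s t v) := by
  refine ⟨E.card, dset_le fun l hl => ?_⟩
  obtain ⟨e, he⟩ := List.exists_mem_of_ne_nil l (through_ne_nil hst hl.1)
  exact ⟨e, he, path_mem hl.1 e he⟩

theorem sigma_le_cut {V : Type*} {E C : Finset (V × V)} {s t v : V}
    (hC : ∀ l, ThroughPath E s t v l → ∃ e ∈ l, e ∈ C) :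
    maxDisjointThrough E s t v ≤ C.card :=
  csSup_le' (dset_le hC)

theorem le_sigma {V : Type*} {E : Finset (V × V)} {s t v : V} (hst : s ≠ t) (k : ℕ)
    (P : ℕ → List (V × V)) (h1 : ∀ i < k, ThroughPath E s t v (P i))
    (h2 : ∀ i < k, ∀ j < k, i ≠ j → ∀ e, e ∈ P i → e ∉ P j) :
    k ≤ maxDisjointThrough E s t v := by
  refine le_csSup (dset_bdd v hst) ⟨(Finset.range k).image P, ?_, ?_, ?_⟩
  · rw [Finset.card_image_of_injOn, Finset.card_range]
    intro i hi j hj hij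
    by_contra hne
    simp only [Finset.coe_range, Set.mem_Iio] at hi hj
    obtain ⟨e, he⟩ := List.exists_mem_of_ne_nil _ (through_ne_nil hst (h1 i hi).1)
    exact h2 i hi j hj hne e he (hij ▸ he)
  · intro l hl
    obtain ⟨i, hi, rfl⟩ := Finset.mem_image.1 hl
    exact h1 i (by simpa using hi)
  · intro l1 hl1 l2 hl2 hne
    obtain ⟨i, hi, rfl⟩ := Finset.mem_image.1 hl1
    obtain ⟨j, hj, rfl⟩ := Finset.mem_image.1 hl2
    exact h2 i (by simpa using hi) j (by simpa using hj) (fun h => hne (h ▸ rfl))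

theorem end_mem {V : Type*} {E : Finset (V × V)} {a b : V} {l : List (V × V)}
    (h : PathIn E a b l) : b = a ∨ b ∈ l.map Prod.snd := by
  induction h with
  | nil a => exact Or.inl rfl
  | cons hab _ ih =>
    rcases ih with rfl | h
    · right; simp
    · right; exact List.mem_cons_of_mem _ h

theorem through_split {V : Type*} {E : Finset (V × V)} {s t v : V} {l : List (V × V)}
    (h : ThroughPath E s t v l) : ∃ l1 l2, l = l1 ++ l2 ∧ PathIn E s v l1 ∧ PathIn E v t l2 := by
  obtain ⟨h, rfl | h'⟩ := h
  · exact ⟨[], l, rfl, PathIn.nil _, h⟩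
  · obtain ⟨e, he, rfl⟩ := List.mem_map.1 h'
    obtain ⟨l1, l2, rfl, h1, h2⟩ := path_split h e he
    exact ⟨l1 ++ [e], l2, by simp,
      path_append h1 (PathIn.cons (a := e.1) (b := e.2) (path_mem h e he) (PathIn.nil _)), h2⟩

theorem exists_cut {V : Type*} [Fintype V] [DecidableEq V] (E : Finset (V × V))
    (hE : Acyclic E) (s t v : V) (hst : s ≠ t) :
    ∃ C ⊆ E, C.card ≤ maxDisjointThrough E s t v ∧
      ∀ l, ThroughPath E s t v l → ∃ e ∈ l, e ∈ C := by
  by_cases hv : v = s ∨ v = t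
  · obtain ⟨k, C, P, hCE, hCk, hC, hP, hd⟩ := menger E hE s t hst
    refine ⟨C, hCE, ?_, fun l hl => hC l hl.1⟩
    rw [hCk]
    refine le_sigma hst k P (fun i hi => ⟨hP i hi, ?_⟩) hd
    rcases hv with h | rfl
    · exact Or.inl h
    · exact end_mem (hP i hi)
  · push Not at hv
    obtain ⟨k, C, P, hCE, hCk, hC, hP, hd⟩ := menger E hE s v hv.1.symm
    obtain ⟨k', C', P', hCE', hCk', hC', hP', hd'⟩ := menger E hE v t hv.2
    have hx : ∀ i < k, ∀ j < k', ∀ e, e ∈ P i → e ∉ P' j := by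
      intro i hi j hj e h1 h2
      obtain ⟨_, l2, -, -, h3⟩ := path_split (hP i hi) e h1
      obtain ⟨l1, _, -, h4, -⟩ := path_split (hP' j hj) e h2
      have := hE _ _ (PathIn.cons (a := e.1) (b := e.2) (path_mem (hP i hi) e h1)
        (path_append h3 h4))
      simp at this
    have hmin : min k k' ≤ maxDisjointThrough E s t v := by
      refine le_sigma hst _ (fun i => P i ++ P' i) ?_ ?_
      · intro i hi
        have h1 := hP i (by omega)
        refine ⟨path_append h1 (hP' i (by omega)), Or.inr ?_⟩
        rcases end_mem h1 with h | h
        · exact absurd h hv.1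
        · rw [List.map_append]; exact List.mem_append_left _ h
      · intro i hi j hj hij e h1 h2
        have hi1 : i < k := by omega
        have hi2 : i < k' := by omega
        have hj1 : j < k := by omega
        have hj2 : j < k' := by omega
        rcases List.mem_append.1 h1 with h1 | h1 <;> rcases List.mem_append.1 h2 with h2 | h2
        · exact hd i hi1 j hj1 hij e h1 h2
        · exact hx i hi1 j hj2 e h1 h2
        · exact hx j hj1 i hi2 e h2 h1
        · exact hd' i hi2 j hj2 hij e h1 h2
    rcases le_total k k' with h | h
    · refine ⟨C, hCE, by rw [hCk]; rwa [min_eq_left h] at hmin, fun l hl => ?_⟩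
      obtain ⟨l1, l2, rfl, h1, h2⟩ := through_split hl
      obtain ⟨e, he, heC⟩ := hC l1 h1
      exact ⟨e, List.mem_append_left _ he, heC⟩
    · refine ⟨C', hCE', by rw [hCk']; rwa [min_eq_right h] at hmin, fun l hl => ?_⟩
      obtain ⟨l1, l2, rfl, h1, h2⟩ := through_split hl
      obtain ⟨e, he, heC⟩ := hC' l2 h2
      exact ⟨e, List.mem_append_right _ he, heC⟩

theorem compl_intermediacy {V : Type*} [DecidableEq V] (E : Finset (V × V)) (p : ℝ)
    (s t v : V) : 1 - intermediacy E p s t v =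
      ∑ S ∈ E.powerset, p ^ S.card * (1 - p) ^ (E.card - S.card) *
        (if ActiveThrough E S s t v then 0 else 1) := by
  have h := Finset.sum_pow_mul_eq_add_pow p (1 - p) E
  rw [add_sub_cancel, one_pow] at h
  refine Eq.trans (congrArg (fun z : ℝ => z - intermediacy E p s t v) h.symm) ?_
  rw [intermediacy, ← Finset.sum_sub_distrib]
  refine Finset.sum_congr rfl fun S _ => ?_
  split_ifs <;> ring

theorem main {V : Type*} [Fintype V] [DecidableEq V]
    (E : Finset (V × V)) (hacyc : Acyclic E) (s t : V) (hst : s ≠ t) (u v : V)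
    (hsigma : maxDisjointThrough E s t v < maxDisjointThrough E s t u) :
    ∃ ε > (0 : ℝ), ∀ p : ℝ, 1 - ε < p → p < 1 →
      intermediacy E p s t v < intermediacy E p s t u := by
  obtain ⟨C, hCE, hCk, hC⟩ := exists_cut E hacyc s t v hst
  have hcE := Finset.card_le_card hCE
  set m := E.card with hm
  set k := C.card with hk
  refine ⟨1 / 2 * (1 / 4) ^ m, by positivity, fun p hp hp1 => ?_⟩
  have hq : 0 < 1 - p := by linarith
  have h4 : ((1 : ℝ) / 4) ^ m ≤ 1 := pow_le_one₀ (by norm_num) (by norm_num)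
  have h4' : (0 : ℝ) < (1 / 4) ^ m := by positivity
  have hp2 : 1 / 2 ≤ p := by linarith
  have hp0 : 0 < p := by linarith
  have hv : p ^ (m - k) * (1 - p) ^ k ≤ 1 - intermediacy E p s t v := by
    rw [compl_intermediacy]
    have hmem : E \ C ∈ E.powerset := Finset.mem_powerset.2 Finset.sdiff_subset
    have hcard : (E \ C).card = m - k := Finset.card_sdiff_of_subset hCE
    have hna : ¬ ActiveThrough E (E \ C) s t v := by
      rintro ⟨l, hl, h⟩
      obtain ⟨e, he, heC⟩ := hC l hl
      exact (Finset.mem_sdiff.1 (h e he)).2 heC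
    refine le_trans (le_of_eq ?_) (Finset.single_le_sum (f := fun S : Finset (V × V) =>
      p ^ S.card * (1 - p) ^ (E.card - S.card) *
        (if ActiveThrough E S s t v then (0 : ℝ) else 1)) ?_ hmem)
    · simp only [if_neg hna, hcard, mul_one]
      congr 2; omega
    · intro S _
      split_ifs <;> positivity
  have hu : 1 - intermediacy E p s t u ≤ 2 ^ m * (1 - p) ^ (k + 1) := by
    rw [compl_intermediacy]
    have : ∀ S ∈ E.powerset, p ^ S.card * (1 - p) ^ (E.card - S.card) *
        (if ActiveThrough E S s t u then (0 : ℝ) else 1) ≤ (1 - p) ^ (k + 1) := by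
      intro S hS
      split_ifs with ha
      · simp only [mul_zero]; positivity
      · have h1 : maxDisjointThrough E s t u ≤ (E \ S).card := by
          refine sigma_le_cut fun l hl => ?_
          by_contra hno
          push Not at hno
          refine ha ⟨l, hl, fun e he => ?_⟩
          by_contra heS
          exact hno e he (Finset.mem_sdiff.2 ⟨path_mem hl.1 e he, heS⟩)
        rw [Finset.card_sdiff_of_subset (Finset.mem_powerset.1 hS)] at h1
        rw [mul_one]
        calc p ^ S.card * (1 - p) ^ (E.card - S.card)
            ≤ 1 * (1 - p) ^ (k + 1) := by
              refine mul_le_mul (pow_le_one₀ hp0.le hp1.le)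
                (pow_le_pow_of_le_one hq.le (by linarith) (by omega)) (by positivity) (by norm_num)
          _ = _ := one_mul _
    have h2 := Finset.sum_le_card_nsmul _ _ _ this
    rw [Finset.card_powerset, nsmul_eq_mul] at h2
    push_cast at h2
    exact h2
  have hlt : 2 ^ m * (1 - p) ^ (k + 1) < p ^ (m - k) * (1 - p) ^ k := by
    rw [pow_succ]
    have h1 : (2 : ℝ) ^ m * (1 - p) < p ^ (m - k) := by
      calc (2 : ℝ) ^ m * (1 - p) < 2 ^ m * (1 / 4) ^ m := by
            refine mul_lt_mul_of_pos_left ?_ (by positivity)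
            linarith
        _ = (1 / 2) ^ m := by rw [← mul_pow]; norm_num
        _ ≤ p ^ m := pow_le_pow_left₀ (by norm_num) hp2 m
        _ ≤ p ^ (m - k) := pow_le_pow_of_le_one hp0.le hp1.le (by omega)
    have := mul_lt_mul_of_pos_right h1 (pow_pos hq k)
    linarith
  linarith

end IntermediacyAux

/-- If every node lies on a directed `s`–`t` path and `σ_u > σ_v`, then
there is an `ε > 0` such that `φ_u(p) > φ_v(p)` for all `p ∈ (1 − ε, 1)`. -/
theorem intermediacy_gt_of_more_disjoint {V : Type*} [Fintype V] [DecidableEq V]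
    (E : Finset (V × V)) (hacyc : Acyclic E) (s t : V)
    (hall : ∀ x : V, ∃ l, ThroughPath E s t x l) (u v : V)
    (hsigma : maxDisjointThrough E s t v < maxDisjointThrough E s t u) :
    ∃ ε > (0 : ℝ), ∀ p : ℝ, 1 - ε < p → p < 1 →
      intermediacy E p s t v < intermediacy E p s t u := by
  by_cases hst : s = t
  · subst hst
    have h : ∀ x : V, x = s := by
      intro x
      obtain ⟨l, hl, hx⟩ := hall x
      have := hacyc s l hl
      subst this
      simpa using hx
    rw [h u, h v] at hsigma
    exact absurd hsigma (lt_irrefl _)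
  · exact IntermediacyAux.main E hacyc s t hst u v hsigma
end

section
/- Let G = (V,E) be a finite directed acyclic graph with source s and target t in which every node lies on at least one directed s–t path, and let u, v ∈ V with σ_u > σ_v. Then the ratio (1 − φ_u(p))/(1 − φ_v(p)) tends to 0 as p tends to 1 from below. -/
open scoped Classical

section Helpers

variable {V : Type*}

theorem pathIn_mono {F G : Finset (V × V)} (h : F ⊆ G) {a b : V} {l : List (V × V)}
    (hp : PathIn F a b l) : PathIn G a b l := by
  induction hp with
  | nil a => exact PathIn.nil a
  | cons hab _ ih => exact PathIn.cons (h hab) ih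

theorem pathIn_mem {F : Finset (V × V)} {a b : V} {l : List (V × V)}
    (hp : PathIn F a b l) : ∀ e ∈ l, e ∈ F := by
  induction hp with
  | nil a => simp
  | cons hab _ ih =>
    intro e he
    rcases List.mem_cons.1 he with rfl | he
    · exact hab
    · exact ih e he

theorem pathIn_append {F : Finset (V × V)} {a b c : V} {l m : List (V × V)}
    (hp : PathIn F a b l) (hq : PathIn F b c m) : PathIn F a c (l ++ m) := by
  induction hp with
  | nil a => exact hq
  | cons hab _ ih => exact PathIn.cons hab (ih hq)

theorem pathIn_through {F : Finset (V × V)} {s t v : V} {l : List (V × V)}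
    (hp : PathIn F s t l) (hv : v = s ∨ v ∈ l.map Prod.snd) :
    ∃ l₁ l₂, l = l₁ ++ l₂ ∧ PathIn F s v l₁ ∧ PathIn F v t l₂ := by
  induction hp with
  | nil a =>
    rcases hv with rfl | hv
    · exact ⟨[], [], rfl, PathIn.nil _, PathIn.nil _⟩
    · simp at hv
  | @cons a b c l hab h ih =>
    rcases hv with rfl | hv
    · exact ⟨[], _, rfl, PathIn.nil _, PathIn.cons hab h⟩
    · have : v = b ∨ v ∈ l.map Prod.snd := by simpa using hv
      obtain ⟨l₁, l₂, rfl, h₁, h₂⟩ := ih this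
      exact ⟨(a, b) :: l₁, l₂, rfl, PathIn.cons hab h₁, h₂⟩

theorem pathIn_end {F : Finset (V × V)} {s t : V} {l : List (V × V)}
    (hp : PathIn F s t l) : t = s ∨ t ∈ l.map Prod.snd := by
  induction hp with
  | nil a => exact Or.inl rfl
  | @cons a b c l hab h ih =>
    right
    rcases ih with rfl | ih
    · simp
    · simp only [List.map_cons, List.mem_cons]
      exact Or.inr ih

/-- An edge of a walk splits it. -/
theorem pathIn_edge {F : Finset (V × V)} {s t : V} {l : List (V × V)}
    (hp : PathIn F s t l) {e : V × V} (he : e ∈ l) :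
    ∃ l₁ l₂, PathIn F s e.1 l₁ ∧ PathIn F e.2 t l₂ := by
  induction hp with
  | nil a => simp at he
  | @cons a b c l hab h ih =>
    rcases List.mem_cons.1 he with rfl | he
    · exact ⟨[], l, PathIn.nil _, h⟩
    · obtain ⟨l₁, l₂, h₁, h₂⟩ := ih he
      exact ⟨_, l₂, PathIn.cons hab h₁, h₂⟩

theorem pathIn_cut {F : Finset (V × V)} {a b : V} {l : List (V × V)}
    (hp : PathIn F a b l) {R : Finset V} (ha : a ∈ R) (hb : b ∉ R) :
    ∃ e ∈ l, e.1 ∈ R ∧ e.2 ∉ R := by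
  induction hp with
  | nil a => exact absurd ha hb
  | @cons a b c l hab h ih =>
    by_cases hbR : b ∈ R
    · obtain ⟨e, he, hcr⟩ := ih hbR hb
      exact ⟨e, List.mem_cons_of_mem _ he, hcr⟩
    · exact ⟨(a, b), by simp, ha, hbR⟩

variable [DecidableEq V]

/-- Out-degree minus in-degree. -/
def exc (F : Finset (V × V)) (x : V) : ℤ :=
  ∑ e ∈ F, ((if e.1 = x then 1 else 0) - (if e.2 = x then 1 else 0))

theorem exc_erase {F : Finset (V × V)} {e : V × V} (he : e ∈ F) (x : V) :
    exc (F.erase e) x = exc F x - (if e.1 = x then 1 else 0) + (if e.2 = x then 1 else 0) := by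
  unfold exc
  rw [← Finset.add_sum_erase F _ he]
  ring

theorem exists_out {F : Finset (V × V)} {a : V} (h : 1 ≤ exc F a) : ∃ y, (a, y) ∈ F := by
  by_contra hcon
  push Not at hcon
  have : exc F a ≤ 0 := by
    unfold exc
    apply Finset.sum_nonpos
    rintro ⟨x, y⟩ he
    have : x ≠ a := by rintro rfl; exact hcon y he
    simp only [this, if_false]
    split_ifs <;> simp
  omega

theorem peel_one (n : ℕ) : ∀ (F : Finset (V × V)), F.card = n → ∀ a b : V, a ≠ b →
    (∀ x, x ≠ b → 0 ≤ exc F x) → 1 ≤ exc F a →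
    ∃ l, PathIn F a b l ∧ ∀ x, exc (F \ l.toFinset) x =
      exc F x - (if a = x then 1 else 0) + (if b = x then 1 else 0) := by
  induction n with
  | zero =>
    intro F hF a b _ _ h1
    obtain ⟨y, hy⟩ := exists_out h1
    rw [Finset.card_eq_zero] at hF
    simp [hF] at hy
  | succ n ih =>
    intro F hF a b hab h0 h1
    obtain ⟨y, hy⟩ := exists_out h1
    have hE := exc_erase hy
    simp only at hE
    by_cases hyb : y = b
    · subst hyb
      refine ⟨[(a, y)], PathIn.cons hy (PathIn.nil _), ?_⟩
      intro x
      rw [← hE x]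
      congr 1
      ext e; simp [and_comm]
    · have hcard : (F.erase (a, y)).card = n := by
        rw [Finset.card_erase_of_mem hy]; omega
      obtain ⟨l, hl, hx⟩ := ih (F.erase (a, y)) hcard y b hyb
        (by
          intro x hxb
          rw [hE]
          by_cases hax : a = x
          · subst hax
            simp only [if_true]
            split_ifs <;> omega
          · have := h0 x hxb
            simp only [hax, if_false]
            split_ifs <;> omega)
        (by
          rw [hE]
          have := h0 y hyb
          by_cases hay : a = y
          · subst hay; simp; omega
          · simp [hay]; omega)
      refine ⟨(a, y) :: l, PathIn.cons hy (pathIn_mono (Finset.erase_subset _ _) hl), ?_⟩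
      intro x
      have hs : F \ ((a, y) :: l).toFinset = (F.erase (a, y)) \ l.toFinset := by
        ext e; simp; tauto
      rw [hs, hx, hE]
      ring

/-- `k` pairwise edge-disjoint walks. -/
def ManyPaths (F : Finset (V × V)) (a b : V) (k : ℕ) : Prop :=
  ∃ f : ℕ → List (V × V), (∀ i < k, PathIn F a b (f i)) ∧
    ∀ i < k, ∀ j < k, i ≠ j → ∀ e, e ∈ f i → e ∉ f j

theorem peel_many (k : ℕ) : ∀ (F : Finset (V × V)) (a b : V), a ≠ b →
    (∀ x, x ≠ b → 0 ≤ exc F x) → (k : ℤ) ≤ exc F a → ManyPaths F a b k := by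
  induction k with
  | zero => intro F a b _ _ _; exact ⟨fun _ => [], by simp, by simp⟩
  | succ k ih =>
    intro F a b hab h0 h1
    push_cast at h1
    obtain ⟨l, hl, hx⟩ := peel_one F.card F rfl a b hab h0 (by omega)
    obtain ⟨f, hf, hd⟩ := ih (F \ l.toFinset) a b hab
      (by
        intro x hxb
        rw [hx]
        have := h0 x hxb
        by_cases hax : a = x
        · subst hax
          simp only [if_true]
          split_ifs <;> omega
        · simp only [hax, if_false]
          split_ifs <;> omega)
      (by rw [hx]; simp [hab.symm]; omega)
    have hfl : ∀ i < k, ∀ e ∈ f i, e ∉ l := by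
      intro i hi e he
      have := pathIn_mem (hf i hi) e he
      simpa using (Finset.mem_sdiff.1 this).2
    refine ⟨fun i => if i < k then f i else l, ?_, ?_⟩
    · intro i _
      by_cases hik : i < k
      · simp only [hik, if_true]
        exact pathIn_mono Finset.sdiff_subset (hf i hik)
      · simpa only [hik, if_false] using hl
    · intro i hi j hj hij e
      by_cases hik : i < k <;> by_cases hjk : j < k <;> simp only [hik, hjk, if_true, if_false]
      · exact hd i hik j hjk hij e
      · exact hfl i hik e
      · intro he he'; exact hfl j hjk e he' he
      · omega

/-- Number of edges leaving `R`. -/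
def dOut (F : Finset (V × V)) (R : Finset V) : ℤ :=
  ∑ e ∈ F, (if e.1 ∈ R ∧ e.2 ∉ R then 1 else 0)

theorem dOut_submod (F : Finset (V × V)) (R T : Finset V) :
    dOut F (R ∪ T) + dOut F (R ∩ T) ≤ dOut F R + dOut F T := by
  unfold dOut
  rw [← Finset.sum_add_distrib, ← Finset.sum_add_distrib]
  apply Finset.sum_le_sum
  intro e _
  by_cases h1 : e.1 ∈ R <;> by_cases h2 : e.2 ∈ R <;> by_cases h3 : e.1 ∈ T <;>
    by_cases h4 : e.2 ∈ T <;> simp [h1, h2, h3, h4]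

theorem menger [Fintype V] (n : ℕ) : ∀ (F : Finset (V × V)), F.card = n → ∀ (a b : V) (k : ℕ),
    a ≠ b → (∀ R : Finset V, a ∈ R → b ∉ R → (k : ℤ) ≤ dOut F R) → ManyPaths F a b k := by
  induction n using Nat.strong_induction_on with
  | _ n ih =>
  intro F hF a b k hab hcut
  by_cases hred : ∃ e ∈ F, ∀ R : Finset V, a ∈ R → b ∉ R → (k : ℤ) ≤ dOut (F.erase e) R
  · obtain ⟨e, he, hc⟩ := hred
    have hlt : (F.erase e).card < n := hF ▸ Finset.card_erase_lt_of_mem he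
    obtain ⟨f, hf, hd⟩ := ih _ hlt (F.erase e) rfl a b k hab hc
    exact ⟨f, fun i hi => pathIn_mono (Finset.erase_subset _ _) (hf i hi), hd⟩
  · push Not at hred
    have htight : ∀ e ∈ F, ∃ R : Finset V, a ∈ R ∧ b ∉ R ∧ e.1 ∈ R ∧ e.2 ∉ R ∧ dOut F R ≤ k := by
      intro e he
      obtain ⟨R, haR, hbR, hlt⟩ := hred e he
      have h1 := hcut R haR hbR
      have h2 : dOut F R = (if e.1 ∈ R ∧ e.2 ∉ R then 1 else 0) + dOut (F.erase e) R := by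
        unfold dOut
        rw [← Finset.add_sum_erase F _ he]
      by_cases hc : e.1 ∈ R ∧ e.2 ∉ R
      · rw [if_pos hc] at h2
        exact ⟨R, haR, hbR, hc.1, hc.2, by omega⟩
      · rw [if_neg hc] at h2; omega
    have hka : (k : ℤ) ≤ exc F a := by
      refine (hcut {a} (by simp) (by simpa using hab.symm)).trans ?_
      unfold dOut exc
      apply Finset.sum_le_sum
      intro e he
      obtain ⟨R, haR, hbR, h1, h2, _⟩ := htight e he
      have : e.2 ≠ a := by intro h; rw [h] at h2; exact h2 haR
      by_cases h : e.1 = a <;> simp [this, h]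
    refine peel_many k F a b hab ?_ hka
    intro x hxb
    by_cases hin : ∃ e ∈ F, e.2 = x
    · let Q : Finset (Finset V) :=
        Finset.univ.filter (fun R => a ∈ R ∧ b ∉ R ∧ x ∉ R ∧ dOut F R ≤ k)
      have hQ : Q.Nonempty := by
        obtain ⟨e, he, rfl⟩ := hin
        obtain ⟨R, h1, h2, h3, h4, h5⟩ := htight e he
        exact ⟨R, by simp [Q, h1, h2, h4, h5]⟩
      obtain ⟨U, hU, hmax⟩ := Finset.exists_max_image Q Finset.card hQ
      obtain ⟨haU, hbU, hxU, hdU⟩ : a ∈ U ∧ b ∉ U ∧ x ∉ U ∧ dOut F U ≤ k := by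
        simpa [Q] using hU
      have hall : ∀ e ∈ F, e.2 = x → e.1 ∈ U := by
        rintro e he rfl
        obtain ⟨R, h1, h2, h3, h4, h5⟩ := htight e he
        have hsub := dOut_submod F R U
        have hint := hcut (R ∩ U) (by simp [h1, haU]) (by simp [h2])
        have hmem : R ∪ U ∈ Q := by
          simp only [Q, Finset.mem_filter, Finset.mem_univ, true_and, Finset.mem_union]
          refine ⟨Or.inl h1, by tauto, by tauto, by omega⟩
        have hle := hmax _ hmem
        have heq : U = R ∪ U := Finset.eq_of_subset_of_card_le Finset.subset_union_right hle
        rw [heq]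
        exact Finset.mem_union_left _ h3
      have h1 := hcut (insert x U) (by simp [haU]) (by simp [hbU, hxb.symm])
      have h2 : dOut F (insert x U) ≤ dOut F U + exc F x := by
        unfold dOut exc
        rw [← Finset.sum_add_distrib]
        apply Finset.sum_le_sum
        intro e he
        by_cases hx2 : e.2 = x
        · have := hall e he hx2
          rw [hx2]
          simp [this, hxU]
          split_ifs <;> simp
        · by_cases hx1 : e.1 = x
          · simp only [hx1, hx2]
            simp [hxU]
            split_ifs <;> simp
          · simp [hx1, hx2]
      omega
    · push Not at hin
      unfold exc
      apply Finset.sum_nonneg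
      intro e he
      simp only [hin e he, if_false]
      split_ifs <;> simp

theorem menger_alt [Fintype V] (E : Finset (V × V)) (a b : V) (k : ℕ) :
    ManyPaths E a b k ∨ ∃ C ⊆ E, C.card < k ∧ ∀ l, PathIn E a b l → ∃ e ∈ l, e ∈ C := by
  by_cases hab : a = b
  · subst hab
    exact Or.inl ⟨fun _ => [], fun _ _ => PathIn.nil _, by simp⟩
  by_cases hcut : ∀ R : Finset V, a ∈ R → b ∉ R → (k : ℤ) ≤ dOut E R
  · exact Or.inl (menger _ E rfl a b k hab hcut)
  · right
    push Not at hcut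
    obtain ⟨R, ha, hb, hlt⟩ := hcut
    refine ⟨E.filter (fun e => e.1 ∈ R ∧ e.2 ∉ R), Finset.filter_subset _ _, ?_, ?_⟩
    · rw [dOut, Finset.sum_boole] at hlt
      exact_mod_cast hlt
    · intro l hl
      obtain ⟨e, he, hcr⟩ := pathIn_cut hl ha hb
      exact ⟨e, he, Finset.mem_filter.2 ⟨pathIn_mem hl e he, hcr⟩⟩

/-- A family of disjoint nonempty lists meeting a set has at most as many members. -/
theorem card_le_of_disjoint (P : Finset (List (V × V))) (D : Finset (V × V))
    (hdisj : ∀ l₁ ∈ P, ∀ l₂ ∈ P, l₁ ≠ l₂ → ∀ e, e ∈ l₁ → e ∉ l₂)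
    (hmeet : ∀ l ∈ P, ∃ e ∈ l, e ∈ D) : P.card ≤ D.card := by
  rcases P.eq_empty_or_nonempty with rfl | ⟨l₀, hl₀⟩
  · simp
  obtain ⟨e₀, _⟩ := hmeet l₀ hl₀
  have : Nonempty (V × V) := ⟨e₀⟩
  choose! g hg hgD using hmeet
  apply Finset.card_le_card_of_injOn g (fun l hl => hgD l hl)
  intro l₁ h₁ l₂ h₂ heq
  by_contra hne
  exact hdisj l₁ h₁ l₂ h₂ hne _ (hg l₁ h₁) (heq ▸ hg l₂ h₂)

theorem exists_cut [Fintype V] (E : Finset (V × V)) (hacyc : Acyclic E) (s t v : V)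
    (hst : s ≠ t) : ∃ C ⊆ E, C.card ≤ maxDisjointThrough E s t v ∧
      ¬ ActiveThrough E (E \ C) s t v := by
  have key : ∀ C ⊆ E, (∀ l, ThroughPath E s t v l → ∃ e ∈ l, e ∈ C) →
      ¬ ActiveThrough E (E \ C) s t v := by
    rintro C _ hC ⟨l, hl, hS⟩
    obtain ⟨e, he, heC⟩ := hC l hl
    exact (Finset.mem_sdiff.1 (hS e he)).2 heC
  set K := maxDisjointThrough E s t v + 1 with hK
  rcases menger_alt E s v K with ⟨f, hf, hfd⟩ | ⟨C, hCE, hCK, hC⟩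
  swap
  · refine ⟨C, hCE, by omega, key C hCE ?_⟩
    rintro l ⟨hl, hv⟩
    obtain ⟨l₁, l₂, rfl, h₁, h₂⟩ := pathIn_through hl hv
    obtain ⟨e, he, heC⟩ := hC _ h₁
    exact ⟨e, List.mem_append_left _ he, heC⟩
  rcases menger_alt E v t K with ⟨g, hg, hgd⟩ | ⟨C, hCE, hCK, hC⟩
  swap
  · refine ⟨C, hCE, by omega, key C hCE ?_⟩
    rintro l ⟨hl, hv⟩
    obtain ⟨l₁, l₂, rfl, h₁, h₂⟩ := pathIn_through hl hv
    obtain ⟨e, he, heC⟩ := hC _ h₂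
    exact ⟨e, List.mem_append_right _ he, heC⟩
  exfalso
  have hfg : ∀ i < K, ∀ j < K, ∀ e, e ∈ f i → e ∉ g j := by
    rintro i hi j hj ⟨x, y⟩ hef heg
    obtain ⟨_, m, _, hm⟩ := pathIn_edge (hf i hi) hef
    obtain ⟨m', _, hm', _⟩ := pathIn_edge (hg j hj) heg
    have := hacyc x _ (PathIn.cons (pathIn_mem (hf i hi) _ hef) (pathIn_append hm hm'))
    simp at this
  have hthr : ∀ i < K, ThroughPath E s t v (f i ++ g i) := by
    intro i hi
    refine ⟨pathIn_append (hf i hi) (hg i hi), ?_⟩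
    rcases pathIn_end (hf i hi) with h | h
    · exact Or.inl h
    · right; rw [List.map_append]; exact List.mem_append_left _ h
  have hne : ∀ l, ThroughPath E s t v l → ∃ e ∈ l, e ∈ E := by
    rintro l ⟨hl, _⟩
    obtain ⟨e, he, _⟩ := pathIn_cut hl (R := {s}) (by simp) (by simpa using hst.symm)
    exact ⟨e, he, pathIn_mem hl e he⟩
  have hdis : ∀ i < K, ∀ j < K, i ≠ j → ∀ e, e ∈ f i ++ g i → e ∉ f j ++ g j := by
    intro i hi j hj hij e he he'
    rcases List.mem_append.1 he with he | he <;> rcases List.mem_append.1 he' with he' | he'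
    · exact hfd i hi j hj hij e he he'
    · exact hfg i hi j hj e he he'
    · exact hfg j hj i hi e he' he
    · exact hgd i hi j hj hij e he he'
  have hle : K ≤ maxDisjointThrough E s t v := by
    apply le_csSup
    · refine ⟨E.card, ?_⟩
      rintro n ⟨P, rfl, hP, hd⟩
      exact card_le_of_disjoint P E hd (fun l hl => hne l (hP l hl))
    · refine ⟨(Finset.range K).image (fun i => f i ++ g i), ?_, ?_, ?_⟩
      · rw [Finset.card_image_of_injOn, Finset.card_range]
        intro i hi j hj heq
        have hi' : i < K := by simpa using hi
        have hj' : j < K := by simpa using hj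
        by_contra hij
        obtain ⟨e, he, _⟩ := hne _ (hthr i hi')
        have heq' : f i ++ g i = f j ++ g j := heq
        exact hdis i hi' j hj' hij e he (heq' ▸ he)
      · intro l hl
        obtain ⟨i, hi, rfl⟩ := Finset.mem_image.1 hl
        exact hthr i (Finset.mem_range.1 hi)
      · intro l₁ h₁ l₂ h₂ hne
        obtain ⟨i, hi, rfl⟩ := Finset.mem_image.1 h₁
        obtain ⟨j, hj, rfl⟩ := Finset.mem_image.1 h₂
        exact hdis i (Finset.mem_range.1 hi) j (Finset.mem_range.1 hj)
          (by rintro rfl; exact hne rfl)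
  omega

theorem card_of_not_active (E : Finset (V × V)) (s t u : V)
    (hpos : 0 < maxDisjointThrough E s t u) (S : Finset (V × V)) (hS : S ⊆ E)
    (hact : ¬ ActiveThrough E S s t u) :
    maxDisjointThrough E s t u ≤ E.card - S.card := by
  rw [← Finset.card_sdiff_of_subset hS]
  have hmem : maxDisjointThrough E s t u ∈ {n | ∃ P : Finset (List (V × V)), P.card = n ∧
      (∀ l ∈ P, ThroughPath E s t u l) ∧
      ∀ l₁ ∈ P, ∀ l₂ ∈ P, l₁ ≠ l₂ → ∀ e, e ∈ l₁ → e ∉ l₂} := by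
    refine Nat.sSup_mem ⟨0, ∅, by simp⟩ ?_
    by_contra hb
    have : maxDisjointThrough E s t u = 0 := Nat.sSup_of_not_bddAbove hb
    omega
  obtain ⟨P, hc, hP, hd⟩ := hmem
  rw [← hc]
  apply card_le_of_disjoint P _ hd
  intro l hl
  by_contra hcon
  push Not at hcon
  apply hact
  refine ⟨l, hP l hl, fun e he => ?_⟩
  have h1 := hcon e he
  have h2 := pathIn_mem (hP l hl).1 e he
  by_contra h3
  exact h1 (Finset.mem_sdiff.2 ⟨h2, h3⟩)

theorem one_sub_intermediacy (E : Finset (V × V)) (p : ℝ) (s t v : V) :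
    1 - intermediacy E p s t v = ∑ S ∈ E.powerset, p ^ S.card * (1 - p) ^ (E.card - S.card) *
      (if ActiveThrough E S s t v then 0 else 1) := by
  have h := Finset.sum_pow_mul_eq_add_pow p (1 - p) E
  rw [add_sub_cancel, one_pow] at h
  unfold intermediacy
  rw [sub_eq_iff_eq_add, ← Finset.sum_add_distrib]
  refine h.symm.trans ?_
  apply Finset.sum_congr rfl
  intro S _
  split_ifs <;> ring

end Helpers

/-- If every node lies on a directed `s`–`t` path and `σ_u > σ_v`, then
`(1 − φ_u(p)) / (1 − φ_v(p)) → 0` as `p → 1⁻`. -/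
theorem intermediacy_complement_ratio_tendsto_zero {V : Type*} [Fintype V] [DecidableEq V]
    (E : Finset (V × V)) (hacyc : Acyclic E) (s t : V)
    (hall : ∀ x : V, ∃ l, ThroughPath E s t x l) (u v : V)
    (hsigma : maxDisjointThrough E s t v < maxDisjointThrough E s t u) :
    Filter.Tendsto
      (fun p : ℝ => (1 - intermediacy E p s t u) / (1 - intermediacy E p s t v))
      (nhdsWithin 1 (Set.Iio 1)) (nhds 0) := by
  have hst : s ≠ t := by
    rintro rfl
    have h : ∀ x : V, x = s := by
      intro x
      obtain ⟨l, hl, hx⟩ := hall x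
      have := hacyc _ _ hl
      subst this
      simpa using hx
    rw [h u, h v] at hsigma
    exact lt_irrefl _ hsigma
  obtain ⟨C, hCE, hCc, hCa⟩ := exists_cut E hacyc s t v hst
  have hm : C.card < maxDisjointThrough E s t u := lt_of_le_of_lt hCc hsigma
  have hcE : C.card ≤ E.card := Finset.card_le_card hCE
  -- bounding function
  have hlim : Filter.Tendsto (fun p : ℝ => (2 : ℝ) ^ E.card * (1 - p) / p ^ (E \ C).card)
      (nhdsWithin 1 (Set.Iio 1)) (nhds 0) := by
    have hcont : ContinuousAt (fun p : ℝ => (2 : ℝ) ^ E.card * (1 - p) / p ^ (E \ C).card) 1 := by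
      apply ContinuousAt.div
      · fun_prop
      · fun_prop
      · simp
    have h := hcont.tendsto
    simp only [sub_self, mul_zero, zero_div] at h
    exact h.mono_left nhdsWithin_le_nhds
  have hev : ∀ᶠ p : ℝ in nhdsWithin 1 (Set.Iio 1), 0 < p ∧ p < 1 := by
    have h1 : ∀ᶠ p : ℝ in nhdsWithin 1 (Set.Iio 1), 0 < p :=
      nhdsWithin_le_nhds (lt_mem_nhds one_pos)
    filter_upwards [h1, self_mem_nhdsWithin] with p hp hp'
    exact ⟨hp, hp'⟩
  have hterm : ∀ p : ℝ, 0 < p → p < 1 → ∀ (w : V), ∀ S ∈ E.powerset,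
      0 ≤ p ^ S.card * (1 - p) ^ (E.card - S.card) *
      (if ActiveThrough E S s t w then (0 : ℝ) else 1) := by
    intro p h0 h1 w S _
    have : 0 ≤ 1 - p := by linarith
    split_ifs <;> positivity
  have hlow : ∀ p : ℝ, 0 < p → p < 1 →
      p ^ (E \ C).card * (1 - p) ^ C.card ≤ 1 - intermediacy E p s t v := by
    intro p h0 h1
    rw [one_sub_intermediacy]
    have h := Finset.single_le_sum (hterm p h0 h1 v)
      (Finset.mem_powerset.2 (Finset.sdiff_subset : E \ C ⊆ E))
    rw [if_neg hCa, mul_one] at h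
    have hc : E.card - (E \ C).card = C.card := by
      rw [Finset.card_sdiff_of_subset hCE]; omega
    rwa [hc] at h
  have hup : ∀ p : ℝ, 0 < p → p < 1 →
      1 - intermediacy E p s t u ≤ 2 ^ E.card * (1 - p) ^ (C.card + 1) := by
    intro p h0 h1
    rw [one_sub_intermediacy]
    have h : ∀ S ∈ E.powerset, p ^ S.card * (1 - p) ^ (E.card - S.card) *
        (if ActiveThrough E S s t u then (0 : ℝ) else 1) ≤ (1 - p) ^ (C.card + 1) := by
      intro S hS
      have hq : 0 ≤ 1 - p := by linarith
      split_ifs with hact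
      · rw [mul_zero]; positivity
      · rw [mul_one]
        have hcard := card_of_not_active E s t u (by omega) S (Finset.mem_powerset.1 hS) hact
        calc p ^ S.card * (1 - p) ^ (E.card - S.card)
            ≤ 1 * (1 - p) ^ (E.card - S.card) := by
              gcongr
              exact pow_le_one₀ h0.le h1.le
          _ = (1 - p) ^ (E.card - S.card) := one_mul _
          _ ≤ (1 - p) ^ (C.card + 1) :=
              pow_le_pow_of_le_one hq (by linarith) (by omega)
    have h2 := Finset.sum_le_card_nsmul _ _ _ h
    rw [Finset.card_powerset, nsmul_eq_mul] at h2
    exact_mod_cast h2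
  refine squeeze_zero' ?_ ?_ hlim
  · filter_upwards [hev] with p ⟨h0, h1⟩
    rw [one_sub_intermediacy, one_sub_intermediacy]
    exact div_nonneg (Finset.sum_nonneg (hterm p h0 h1 u)) (Finset.sum_nonneg (hterm p h0 h1 v))
  · filter_upwards [hev] with p ⟨h0, h1⟩
    have hq : 0 < 1 - p := by linarith
    calc (1 - intermediacy E p s t u) / (1 - intermediacy E p s t v)
        ≤ (2 ^ E.card * (1 - p) ^ (C.card + 1)) / (p ^ (E \ C).card * (1 - p) ^ C.card) :=
          div_le_div₀ (by positivity) (hup p h0 h1) (by positivity) (hlow p h0 h1)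
      _ = 2 ^ E.card * (1 - p) / p ^ (E \ C).card := by
          field_simp
          ring
end

section
/- For every integer k ≥ 2 there exists a unique p ∈ (0,1) such that p = 1 − (1 − p²)^k; moreover, for p below this value one has p > 1 − (1 − p²)^k, and for p above this value one has p < 1 − (1 − p²)^k. (Here p is the probability that a single direct edge from u to v is active, and 1 − (1 − p²)^k is the probability that at least one of k edge-disjoint length-2 paths from u to v is fully active.) -/
open scoped Classical

/-- If `h(q) ≥ 1` then `h(p) > 1` for `0 < p < q < 1`, where `h(x) = (1-x)^m (1+x)^(m+1)`. -/
lemma aux_h_gt_one (m : ℕ) {p q : ℝ} (hp : 0 < p) (hpq : p < q) (hq : q < 1)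
    (h : 1 ≤ (1 - q) ^ m * (1 + q) ^ (m + 1)) : 1 < (1 - p) ^ m * (1 + p) ^ (m + 1) := by
  have hq0 : 0 < q := hp.trans hpq
  have hr0 : 0 < p / q := div_pos hp hq0
  have hr1 : p / q < 1 := (div_lt_one hq0).2 hpq
  have h1 : (1 - q) ^ (p / q) < 1 - p := by
    have := rpow_one_add_lt_one_add_mul_self (s := -q) (by linarith) (by linarith) hr0 hr1
    have e : p / q * -q = -p := by field_simp
    rw [e] at this
    simpa [sub_eq_add_neg] using this
  have h2 : (1 + q) ^ (p / q) < 1 + p := by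
    have := rpow_one_add_lt_one_add_mul_self (s := q) (by linarith) (by linarith) hr0 hr1
    have e : p / q * q = p := by field_simp
    rwa [e] at this
  have a1 : 0 < 1 - q := by linarith
  have a2 : 0 < 1 + q := by linarith
  have b1 : 0 < (1 - q) ^ (p / q) := Real.rpow_pos_of_pos a1 _
  have b2 : 0 < (1 + q) ^ (p / q) := Real.rpow_pos_of_pos a2 _
  have h3 : 1 ≤ ((1 - q) ^ (p / q)) ^ m * ((1 + q) ^ (p / q)) ^ (m + 1) := by
    have := Real.one_le_rpow h hr0.le
    rw [Real.mul_rpow (by positivity) (by positivity), ← Real.rpow_pow_comm a1.le,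
      ← Real.rpow_pow_comm a2.le] at this
    exact this
  refine h3.trans_lt ?_
  refine mul_lt_mul' (pow_le_pow_left₀ b1.le h1.le m)
    (pow_lt_pow_left₀ h2 b2.le (Nat.succ_ne_zero m)) (by positivity) ?_
  exact pow_pos (b1.trans h1) m

lemma aux_exists (m : ℕ) (hm : 1 ≤ m) :
    ∃ p ∈ Set.Ioo (0 : ℝ) 1, (1 - p) ^ m * (1 + p) ^ (m + 1) = 1 := by
  have hm' : (1 : ℝ) ≤ m := by exact_mod_cast hm
  obtain ⟨a, ha⟩ : ∃ a : ℝ, a = 1 / (2 * m) := ⟨_, rfl⟩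
  have ha0 : 0 < a := by rw [ha]; positivity
  have hma : m * a = 1 / 2 := by rw [ha]; field_simp
  have ha1 : a ≤ 1 / 2 := by nlinarith
  have hb : 1 + (m : ℝ) * (-a ^ 2) ≤ (1 + -a ^ 2) ^ m :=
    one_add_mul_le_pow (by nlinarith) m
  have hga : 1 ≤ (1 - a) ^ m * (1 + a) ^ (m + 1) := by
    have e : (1 - a) ^ m * (1 + a) ^ (m + 1) = (1 + -a ^ 2) ^ m * (1 + a) := by
      rw [pow_succ, ← mul_assoc, ← mul_pow]; ring
    have e2 : (m : ℝ) * (-a ^ 2) = - (a / 2) := by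
      have : (m : ℝ) * (-a ^ 2) = - (m * a) * a := by ring
      rw [this, hma]; ring
    rw [e]
    rw [e2] at hb
    nlinarith
  have hc : ContinuousOn (fun p : ℝ => (1 - p) ^ m * (1 + p) ^ (m + 1)) (Set.Icc a 1) := by
    fun_prop
  have h1 : (1 - (1 : ℝ)) ^ m * (1 + 1) ^ (m + 1) = 0 := by
    rw [sub_self, zero_pow (by omega), zero_mul]
  obtain ⟨p, hp, hpe⟩ := intermediate_value_Icc' (by linarith : a ≤ 1) hc
    (show (1 : ℝ) ∈ _ from ⟨by simp only [h1]; norm_num, hga⟩)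
  refine ⟨p, ⟨by linarith [hp.1], lt_of_le_of_ne hp.2 ?_⟩, hpe⟩
  rintro rfl
  simp only [h1] at hpe
  norm_num at hpe

/-- For every integer `k ≥ 2` there is a unique `p₀ ∈ (0,1)` with
`p₀ = 1 − (1 − p₀²)^k`; moreover for `p ∈ (0,1)` below `p₀` one has
`p > 1 − (1 − p²)^k`, and above `p₀` one has `p < 1 − (1 − p²)^k`. -/
theorem direct_edge_vs_indirect_paths (k : ℕ) (hk : 2 ≤ k) :
    ∃ p₀ ∈ Set.Ioo (0 : ℝ) 1, p₀ = 1 - (1 - p₀ ^ 2) ^ k ∧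
      (∀ p ∈ Set.Ioo (0 : ℝ) 1, p = 1 - (1 - p ^ 2) ^ k → p = p₀) ∧
      (∀ p ∈ Set.Ioo (0 : ℝ) 1, p < p₀ → 1 - (1 - p ^ 2) ^ k < p) ∧
      (∀ p ∈ Set.Ioo (0 : ℝ) 1, p₀ < p → p < 1 - (1 - p ^ 2) ^ k) := by
  obtain ⟨m, rfl⟩ : ∃ m, k = m + 1 := ⟨k - 1, by omega⟩
  have key : ∀ p : ℝ, (1 - p ^ 2) ^ (m + 1) = (1 - p) * ((1 - p) ^ m * (1 + p) ^ (m + 1)) := by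
    intro p
    rw [← mul_assoc, ← pow_succ', ← mul_pow]
    ring
  obtain ⟨p₀, hp₀, h₀⟩ := aux_exists m (by omega)
  have below : ∀ p ∈ Set.Ioo (0 : ℝ) 1, p < p₀ → 1 - (1 - p ^ 2) ^ (m + 1) < p := by
    intro p hp hlt
    have h := aux_h_gt_one m hp.1 hlt hp₀.2 h₀.ge
    rw [key]
    nlinarith [hp.2]
  have above : ∀ p ∈ Set.Ioo (0 : ℝ) 1, p₀ < p → p < 1 - (1 - p ^ 2) ^ (m + 1) := by
    intro p hp hlt
    have h : (1 - p) ^ m * (1 + p) ^ (m + 1) < 1 := by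
      by_contra hcon
      exact absurd h₀ (aux_h_gt_one m hp₀.1 hlt hp.2 (not_lt.1 hcon)).ne'
    rw [key]
    nlinarith [hp.2]
  refine ⟨p₀, hp₀, by rw [key, h₀]; ring, ?_, below, above⟩
  intro p hp he
  rcases lt_trichotomy p p₀ with h | h | h
  · exact absurd he (below p hp h).ne'
  · exact h
  · exact absurd he (above p hp h).ne
end
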